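/- arXiv:1606.05139 — 6 statements merged into one kernel-verified Lean document; each statement's English description precedes it below -/
import Mathlib

section
/- Let u : ℝ × ℝ → ℝ be a continuous function such that for every n ≥ 1 the map (x,y) ↦ det[u(x_i,y_j)]_{i,j=1}^n/(Δ_n(x)·Δ_n(y)), defined for x, y ∈ ℝ^n each with pairwise distinct coordinates, extends to a strictly positive continuous function M_n on ℝ^n × ℝ^n. Define τ_0 ≡ 1 and, for n ≥ 1, τ_n(x,y) = c_n^{-2}·M_n(x·1_n, y·1_n). Then the functions (τ_n; n ≥ 1) satisfy the two-dimensional Toda equations in integrated form: for every n ≥ 1 and all a, b, c, d ∈ ℝ, log( τ_n(a,c)·τ_n(b,d) / (τ_n(a,d)·τ_n(b,c)) ) = ∫_a^b ∫_c^d τ_{n−1}(x,y)·τ_{n+1}(x,y)/τ_n(x,y)^2 dy dx. -/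
open Finset MeasureTheory

/-- Vandermonde determinant Δ_n(x) = ∏_{i<j} (x_i - x_j). -/
noncomputable def vdm {n : ℕ} (x : Fin n → ℝ) : ℝ :=
  ∏ i, ∏ j ∈ Finset.Ioi i, (x i - x j)

/-- c_n⁻¹ = ∏_{i=1}^{n-1} i!. -/
noncomputable def cInv (n : ℕ) : ℝ := ∏ i ∈ Finset.range n, (Nat.factorial i : ℝ)

/-- `M` is a continuous extension to ℝ^n × ℝ^n of the ratio
det[u(x_i,y_j)]/(Δ_n(x)·Δ_n(y)), which is defined for `x`, `y` each with pairwise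
distinct coordinates. -/
def ExtendsRatio2 (n : ℕ) (u : ℝ → ℝ → ℝ) (M : (Fin n → ℝ) → (Fin n → ℝ) → ℝ) : Prop :=
  Continuous (fun p : (Fin n → ℝ) × (Fin n → ℝ) => M p.1 p.2) ∧
  ∀ x y : Fin n → ℝ, Function.Injective x → Function.Injective y →
    M x y = Matrix.det (Matrix.of fun i j => u (x i) (y j)) / (vdm x * vdm y)

lemma vdm_eq_det {n : ℕ} (x : Fin n → ℝ) :
    vdm x = (Matrix.vandermonde (fun i => - x i)).det := by
  rw [Matrix.det_vandermonde]
  unfold vdm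
  refine Finset.prod_congr rfl fun i _ => Finset.prod_congr rfl fun j _ => ?_
  ring

lemma vdm_ne_zero {n : ℕ} {x : Fin n → ℝ} (hx : Function.Injective x) : vdm x ≠ 0 := by
  rw [vdm_eq_det, Matrix.det_vandermonde_ne_zero_iff]
  intro i j h
  exact hx (neg_injective h)

lemma vdm_perm {n : ℕ} (x : Fin n → ℝ) (σ : Equiv.Perm (Fin n)) :
    vdm (x ∘ σ) = (Equiv.Perm.sign σ : ℤ) * vdm x := by
  rw [vdm_eq_det, vdm_eq_det, ← Matrix.det_permute]
  rfl

lemma vdm_cons {n : ℕ} (p : ℝ) (x : Fin n → ℝ) :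
    vdm (Fin.cons p x : Fin (n + 1) → ℝ) = (∏ j, (p - x j)) * vdm x := by
  unfold vdm
  rw [Fin.prod_univ_succ, Fin.prod_Ioi_zero]
  simp [Fin.prod_Ioi_succ]

lemma inj_event {n : ℕ} (x : Fin n → ℝ) :
    ∀ᶠ ε in nhdsWithin (0 : ℝ) {0}ᶜ, Function.Injective (fun i => x i + ε * (i : ℝ)) := by
  have key : ∀ i j : Fin n, i ≠ j →
      ∀ᶠ ε in nhdsWithin (0 : ℝ) {0}ᶜ, x i + ε * (i : ℝ) ≠ x j + ε * (j : ℝ) := by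
    intro i j hij
    have hij' : ((i : ℕ) : ℝ) - ((j : ℕ) : ℝ) ≠ 0 := by
      rw [sub_ne_zero]
      intro h
      exact hij (Fin.ext (by exact_mod_cast h))
    by_cases hx : x i = x j
    · filter_upwards [self_mem_nhdsWithin] with ε hε h
      have : ε * (((i : ℕ) : ℝ) - ((j : ℕ) : ℝ)) = 0 := by linarith
      rcases mul_eq_zero.1 this with h | h
      · exact hε h
      · exact hij' h
    · refine nhdsWithin_le_nhds ?_
      have h1 : Continuous fun ε : ℝ => x i + ε * ((i : ℕ) : ℝ) := by fun_prop
      have h2 : Continuous fun ε : ℝ => x j + ε * ((j : ℕ) : ℝ) := by fun_prop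
      exact (isOpen_ne_fun h1 h2).mem_nhds (by simpa using hx)
  have := Filter.eventually_all.2 fun i => Filter.eventually_all.2 fun j =>
    Filter.eventually_imp_distrib_left.2 (key i j)
  filter_upwards [this] with ε hε i j h
  by_contra hij
  exact hε i j hij h

lemma dens2 {a b : ℕ} (f g : (Fin a → ℝ) → (Fin b → ℝ) → ℝ)
    (hf : Continuous fun p : (Fin a → ℝ) × (Fin b → ℝ) => f p.1 p.2)
    (hg : Continuous fun p : (Fin a → ℝ) × (Fin b → ℝ) => g p.1 p.2)
    (h : ∀ x y, Function.Injective x → Function.Injective y → f x y = g x y)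
    (x : Fin a → ℝ) (y : Fin b → ℝ) : f x y = g x y := by
  have hc : Continuous fun ε : ℝ => ((fun i => x i + ε * ((i : ℕ) : ℝ) : Fin a → ℝ),
      (fun i => y i + ε * ((i : ℕ) : ℝ) : Fin b → ℝ)) := by fun_prop
  have h1 := ((hf.comp hc).tendsto 0).mono_left (nhdsWithin_le_nhds (s := {0}ᶜ))
  have h2 := ((hg.comp hc).tendsto 0).mono_left (nhdsWithin_le_nhds (s := {0}ᶜ))
  have h3 := h1.congr' (f₂ := (fun p : (Fin a → ℝ) × (Fin b → ℝ) => g p.1 p.2) ∘ _) (by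
    filter_upwards [inj_event x, inj_event y] with ε hx hy
    exact h _ _ hx hy)
  simpa using tendsto_nhds_unique h3 h2

/-- Schur complement. -/
lemma schur {k l : Type} [Fintype k] [Fintype l] [DecidableEq k] [DecidableEq l]
    (u : ℝ → ℝ → ℝ) (P R : k → ℝ) (X Y : l → ℝ)
    (hA : (Matrix.of fun i j => u (X i) (Y j)).det ≠ 0) :
    (Matrix.of fun i j => u (Sum.elim P X i) (Sum.elim R Y j)).det =
      (Matrix.of fun i j => u (X i) (Y j)).det *
        (Matrix.of fun i j => u (P i) (R j) -
          ∑ b, (∑ a, u (P i) (Y a) * (Matrix.of fun i j => u (X i) (Y j))⁻¹ a b)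
            * u (X b) (R j)).det := by
  set A : Matrix l l ℝ := Matrix.of fun i j => u (X i) (Y j) with hAdef
  have : Invertible A := A.invertibleOfIsUnitDet (isUnit_iff_ne_zero.2 hA)
  have h := Matrix.det_fromBlocks₂₂ (Matrix.of fun i j => u (P i) (R j))
    (Matrix.of fun i j => u (P i) (Y j)) (Matrix.of fun i j => u (X i) (R j)) A
  rw [Matrix.invOf_eq_nonsing_inv] at h
  convert h using 2
  · congr 1
    ext (i | i) (j | j) <;> simp [hAdef]
  · congr 1

lemma cons_det {m : ℕ} (u : ℝ → ℝ → ℝ) (p r : ℝ) (X Y : Fin m → ℝ) :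
    (Matrix.of fun i j => u ((Fin.cons p X : Fin (m + 1) → ℝ) i)
      ((Fin.cons r Y : Fin (m + 1) → ℝ) j)).det =
    (Matrix.of fun i j => u (Sum.elim (fun _ : Fin 1 => p) X i)
      (Sum.elim (fun _ : Fin 1 => r) Y j)).det := by
  have hb : Function.Bijective
      (Fin.cons (Sum.inl 0) Sum.inr : Fin (m + 1) → Fin 1 ⊕ Fin m) := by
    rw [Fintype.bijective_iff_injective_and_card]
    refine ⟨?_, by simp [add_comm]⟩
    rw [Fin.cons_injective_iff]
    exact ⟨by simp, Sum.inr_injective⟩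
  rw [← Matrix.det_submatrix_equiv_self (Equiv.ofBijective _ hb)]
  congr 1
  ext i j
  refine Fin.cases ?_ (fun i => ?_) i <;> refine Fin.cases ?_ (fun j => ?_) j <;> simp

lemma cons2_det {m : ℕ} (u : ℝ → ℝ → ℝ) (p q r t : ℝ) (X Y : Fin m → ℝ) :
    (Matrix.of fun i j => u ((Fin.cons p (Fin.cons q X : Fin (m + 1) → ℝ) : Fin (m + 2) → ℝ) i)
      ((Fin.cons r (Fin.cons t Y : Fin (m + 1) → ℝ) : Fin (m + 2) → ℝ) j)).det =
    (Matrix.of fun i j => u (Sum.elim ![p, q] X i) (Sum.elim ![r, t] Y j)).det := by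
  have hb : Function.Bijective
      (Fin.cons (Sum.inl 0) (Fin.cons (Sum.inl 1) Sum.inr : Fin (m + 1) → Fin 2 ⊕ Fin m) :
        Fin (m + 2) → Fin 2 ⊕ Fin m) := by
    rw [Fintype.bijective_iff_injective_and_card]
    refine ⟨?_, by simp; omega⟩
    rw [Fin.cons_injective_iff, Fin.cons_injective_iff]
    refine ⟨?_, by simp, Sum.inr_injective⟩
    rintro ⟨i, hi⟩
    revert hi
    refine Fin.cases ?_ (fun i => ?_) i <;> simp
  rw [← Matrix.det_submatrix_equiv_self (Equiv.ofBijective _ hb)]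
  congr 1
  ext i j
  refine Fin.cases ?_ (fun i => ?_) i <;> refine Fin.cases ?_ (fun j => ?_) j
  · simp
  · refine Fin.cases ?_ (fun j => ?_) j <;> simp
  · refine Fin.cases ?_ (fun i => ?_) i <;> simp
  · refine Fin.cases ?_ (fun i => ?_) i <;> refine Fin.cases ?_ (fun j => ?_) j <;> simp

/-- Desnanot-Jacobi. -/
lemma jacobi_det {m : ℕ} (u : ℝ → ℝ → ℝ) (p q r t : ℝ) (X Y : Fin m → ℝ)
    (hA : (Matrix.of fun i j => u (X i) (Y j)).det ≠ 0) :
    (Matrix.of fun i j => u ((Fin.cons p (Fin.cons q X : Fin (m + 1) → ℝ) : Fin (m + 2) → ℝ) i)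
      ((Fin.cons r (Fin.cons t Y : Fin (m + 1) → ℝ) : Fin (m + 2) → ℝ) j)).det *
      (Matrix.of fun i j => u (X i) (Y j)).det =
    (Matrix.of fun i j => u ((Fin.cons p X : Fin (m + 1) → ℝ) i)
      ((Fin.cons r Y : Fin (m + 1) → ℝ) j)).det *
    (Matrix.of fun i j => u ((Fin.cons q X : Fin (m + 1) → ℝ) i)
      ((Fin.cons t Y : Fin (m + 1) → ℝ) j)).det -
    (Matrix.of fun i j => u ((Fin.cons p X : Fin (m + 1) → ℝ) i)
      ((Fin.cons t Y : Fin (m + 1) → ℝ) j)).det *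
    (Matrix.of fun i j => u ((Fin.cons q X : Fin (m + 1) → ℝ) i)
      ((Fin.cons r Y : Fin (m + 1) → ℝ) j)).det := by
  rw [cons2_det, cons_det, cons_det, cons_det, cons_det]
  rw [schur u _ _ _ _ hA, schur u _ _ _ _ hA, schur u _ _ _ _ hA, schur u _ _ _ _ hA,
    schur u _ _ _ _ hA]
  simp only [Matrix.det_fin_two, Matrix.det_fin_one, Matrix.of_apply, Matrix.cons_val_zero,
    Matrix.cons_val_one]
  ring

lemma N_perm_left {n : ℕ} {u : ℝ → ℝ → ℝ} {N : (Fin n → ℝ) → (Fin n → ℝ) → ℝ}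
    (hN : ExtendsRatio2 n u N) (σ : Equiv.Perm (Fin n)) (x y : Fin n → ℝ) :
    N (x ∘ σ) y = N x y := by
  have hc := hN.1
  refine dens2 (fun x y => N (x ∘ σ) y) N ?_ hc ?_ x y
  · exact hc.comp (f := fun p : (Fin n → ℝ) × (Fin n → ℝ) => (p.1 ∘ σ, p.2)) (by
      unfold Function.comp
      fun_prop)
  · intro x y hx hy
    rw [hN.2 _ _ (hx.comp σ.injective) hy, hN.2 _ _ hx hy, vdm_perm]
    have : (Matrix.of fun i j => u ((x ∘ σ) i) (y j)).det =
        (Equiv.Perm.sign σ : ℤ) * (Matrix.of fun i j => u (x i) (y j)).det := by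
      rw [← Matrix.det_permute]
      rfl
    rw [this, mul_assoc]
    refine mul_div_mul_left _ _ ?_
    rcases Int.units_eq_one_or (Equiv.Perm.sign σ) with h | h <;> simp [h]

lemma ext_swap {n : ℕ} {u : ℝ → ℝ → ℝ} {N : (Fin n → ℝ) → (Fin n → ℝ) → ℝ}
    (hN : ExtendsRatio2 n u N) : ExtendsRatio2 n (fun a b => u b a) (fun x y => N y x) := by
  refine ⟨hN.1.comp continuous_swap, fun x y hx hy => ?_⟩
  change N y x = _
  rw [hN.2 _ _ hy hx, mul_comm (vdm x), ← Matrix.det_transpose]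
  rfl

lemma N_perm_right {n : ℕ} {u : ℝ → ℝ → ℝ} {N : (Fin n → ℝ) → (Fin n → ℝ) → ℝ}
    (hN : ExtendsRatio2 n u N) (σ : Equiv.Perm (Fin n)) (x y : Fin n → ℝ) :
    N x (y ∘ σ) = N x y :=
  N_perm_left (ext_swap hN) σ y x

lemma exists_cons2 {m : ℕ} (x : Fin (m + 2) → ℝ) : ∃ p q, ∃ X : Fin m → ℝ,
    x = (Fin.cons p (Fin.cons q X : Fin (m + 1) → ℝ) : Fin (m + 2) → ℝ) := by
  refine ⟨x 0, x 1, fun i => x i.succ.succ, ?_⟩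
  ext i
  refine Fin.cases ?_ (fun i => ?_) i
  · simp
  · refine Fin.cases ?_ (fun i => ?_) i <;> simp

lemma N_jacobi {u : ℝ → ℝ → ℝ} {N : (n : ℕ) → (Fin n → ℝ) → (Fin n → ℝ) → ℝ}
    (hN : ∀ n, ExtendsRatio2 n u (N n)) (hp : ∀ n x y, 0 < N n x y)
    {m : ℕ} (p q r t : ℝ) (X Y : Fin m → ℝ) :
    (p - q) * (r - t) * N (m + 2) (Fin.cons p (Fin.cons q X : Fin (m + 1) → ℝ))
      (Fin.cons r (Fin.cons t Y : Fin (m + 1) → ℝ)) * N m X Y =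
    N (m + 1) (Fin.cons p X) (Fin.cons r Y) * N (m + 1) (Fin.cons q X) (Fin.cons t Y) -
    N (m + 1) (Fin.cons p X) (Fin.cons t Y) * N (m + 1) (Fin.cons q X) (Fin.cons r Y) := by
  have hcN := fun n => (hN n).1
  have hcc : ∀ n {α : Type} [TopologicalSpace α] (f g : α → Fin n → ℝ), Continuous f →
      Continuous g → Continuous fun a => N n (f a) (g a) := fun n α _ f g hf hg =>
    (hcN n).comp (hf.prodMk hg)
  have h := dens2 (a := m + 2) (b := m + 2)
    (fun x y => (x 0 - x 1) * (y 0 - y 1) * N (m + 2) x y *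
      N m (fun i => x i.succ.succ) (fun i => y i.succ.succ))
    (fun x y => N (m + 1) (Fin.cons (x 0) (fun i => x i.succ.succ))
        (Fin.cons (y 0) (fun i => y i.succ.succ)) *
      N (m + 1) (Fin.cons (x 1) (fun i => x i.succ.succ))
        (Fin.cons (y 1) (fun i => y i.succ.succ)) -
      N (m + 1) (Fin.cons (x 0) (fun i => x i.succ.succ))
        (Fin.cons (y 1) (fun i => y i.succ.succ)) *
      N (m + 1) (Fin.cons (x 1) (fun i => x i.succ.succ))
        (Fin.cons (y 0) (fun i => y i.succ.succ))) ?_ ?_ ?_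
    (Fin.cons p (Fin.cons q X : Fin (m + 1) → ℝ)) (Fin.cons r (Fin.cons t Y : Fin (m + 1) → ℝ))
  · simpa using h
  · refine Continuous.mul (Continuous.mul (by fun_prop) ?_) ?_
    · exact hcc _ _ _ (by fun_prop) (by fun_prop)
    · exact hcc _ _ _ (by fun_prop) (by fun_prop)
  · refine Continuous.sub (Continuous.mul ?_ ?_) (Continuous.mul ?_ ?_) <;>
      exact hcc _ _ _ (Continuous.finCons (by fun_prop) (by fun_prop))
        (Continuous.finCons (by fun_prop) (by fun_prop))
  · intro x y hx hy
    obtain ⟨p, q, X, rfl⟩ := exists_cons2 x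
    obtain ⟨r, t, Y, rfl⟩ := exists_cons2 y
    have hx' := hx
    have hy' := hy
    rw [Fin.cons_injective_iff] at hx' hy'
    obtain ⟨hpq, hqX⟩ := hx'
    obtain ⟨hrt, htY⟩ := hy'
    have hX := (Fin.cons_injective_iff.1 hqX).2
    have hY := (Fin.cons_injective_iff.1 htY).2
    have hpX : Function.Injective (Fin.cons p X : Fin (m + 1) → ℝ) := by
      refine Fin.cons_injective_iff.2 ⟨?_, hX⟩
      rintro ⟨i, hi⟩
      exact hpq ⟨i.succ, by simpa using hi⟩
    have hrY : Function.Injective (Fin.cons r Y : Fin (m + 1) → ℝ) := by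
      refine Fin.cons_injective_iff.2 ⟨?_, hY⟩
      rintro ⟨i, hi⟩
      exact hrt ⟨i.succ, by simpa using hi⟩
    have e0 := (hN m).2 X Y hX hY
    have hA : (Matrix.of fun i j => u (X i) (Y j)).det ≠ 0 := by
      intro h0
      have := hp m X Y
      rw [e0, h0] at this
      simp at this
    have hj := jacobi_det u p q r t X Y hA
    have e2 := (hN (m + 2)).2 _ _ hx hy
    have e1 := (hN (m + 1)).2 _ _ hpX hrY
    have e3 := (hN (m + 1)).2 _ _ hqX htY
    have e4 := (hN (m + 1)).2 _ _ hpX htY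
    have e5 := (hN (m + 1)).2 _ _ hqX hrY
    have v1 := vdm_ne_zero hx
    have v2 := vdm_ne_zero hy
    have v3 := vdm_ne_zero hpX
    have v4 := vdm_ne_zero hrY
    have v5 := vdm_ne_zero hqX
    have v6 := vdm_ne_zero htY
    have v7 := vdm_ne_zero hX
    have v8 := vdm_ne_zero hY
    have w1 : vdm (Fin.cons p (Fin.cons q X : Fin (m + 1) → ℝ) : Fin (m + 2) → ℝ) * vdm X =
        (p - q) * vdm (Fin.cons p X : Fin (m + 1) → ℝ) *
          vdm (Fin.cons q X : Fin (m + 1) → ℝ) := by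
      simp only [vdm_cons, Fin.prod_univ_succ, Fin.cons_zero, Fin.cons_succ]
      ring
    have w2 : vdm (Fin.cons r (Fin.cons t Y : Fin (m + 1) → ℝ) : Fin (m + 2) → ℝ) * vdm Y =
        (r - t) * vdm (Fin.cons r Y : Fin (m + 1) → ℝ) *
          vdm (Fin.cons t Y : Fin (m + 1) → ℝ) := by
      simp only [vdm_cons, Fin.prod_univ_succ, Fin.cons_zero, Fin.cons_succ]
      ring
    rw [eq_div_iff (by positivity)] at e0 e1 e2 e3 e4 e5
    rw [← e0, ← e1, ← e2, ← e3, ← e4, ← e5] at hj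
    simp only [Fin.cons_zero, Fin.cons_one, Fin.cons_succ]
    have hne : vdm (Fin.cons p X : Fin (m + 1) → ℝ) * vdm (Fin.cons q X : Fin (m + 1) → ℝ) *
      (vdm (Fin.cons r Y : Fin (m + 1) → ℝ) * vdm (Fin.cons t Y : Fin (m + 1) → ℝ)) ≠ 0 := by
      positivity
    refine mul_right_cancel₀ hne ?_
    generalize N (m + 2) _ _ = n2 at *
    generalize N m _ _ = n0 at *
    linear_combination hj - n2 * n0 * vdm (Fin.cons r (Fin.cons t Y : Fin (m + 1) → ℝ) : Fin (m + 2) → ℝ) * vdm Y * w1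
      - n2 * n0 * (p - q) * vdm (Fin.cons p X : Fin (m + 1) → ℝ) * vdm (Fin.cons q X : Fin (m + 1) → ℝ) * w2

lemma deriv_diag {m : ℕ} (F : (Fin (m + 1) → ℝ) → ℝ)
    (hF : ∀ (σ : Equiv.Perm (Fin (m + 1))) x, F (x ∘ σ) = F x)
    (K : ℝ → ℝ → (Fin m → ℝ) → ℝ)
    (hK : Continuous fun z : ℝ × ℝ × (Fin m → ℝ) => K z.1 z.2.1 z.2.2)
    (h : ∀ p q X, F (Fin.cons p X) - F (Fin.cons q X) = (p - q) * K p q X) (x : ℝ) :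
    HasDerivAt (fun x => F (fun _ => x)) ((m + 1 : ℝ) * K x x (fun _ => x)) x := by
  rw [hasDerivAt_iff_tendsto_slope_zero]
  have tel : ∀ s : ℝ, F (fun _ => x + s) - F (fun _ => x) =
      s * ∑ k ∈ Finset.range (m + 1),
        K (x + s) x (fun i => if (i : ℕ) < k then x + s else x) := by
    intro s
    let Z : ℕ → Fin (m + 1) → ℝ := fun k i => if (i : ℕ) < k then x + s else x
    have hZ1 : (fun _ => x + s) = Z (m + 1) := by
      ext i
      simp [Z, i.2]
    have hZ0 : (fun _ => x) = Z 0 := by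
      ext i
      simp [Z]
    rw [hZ1, hZ0, ← Finset.sum_range_sub (fun k => F (Z k)), Finset.mul_sum]
    refine Finset.sum_congr rfl fun k hk => ?_
    rw [Finset.mem_range] at hk
    have h1 := h (x + s) x (fun i => if (i : ℕ) < k then x + s else x)
    have e1 : (Fin.cons (x + s) (fun i : Fin m => if (i : ℕ) < k then x + s else x) :
        Fin (m + 1) → ℝ) = Z (k + 1) := by
      ext i
      refine Fin.cases ?_ (fun i => ?_) i <;> simp [Z]
    have e2 : (Fin.cons x (fun i : Fin m => if (i : ℕ) < k then x + s else x) :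
        Fin (m + 1) → ℝ) = Z k ∘ Equiv.swap 0 ⟨k, hk⟩ := by
      ext i
      by_cases hi0 : i = 0
      · subst hi0
        simp [Z]
      · by_cases hik : i = ⟨k, hk⟩
        · obtain ⟨j, rfl⟩ := Fin.exists_succ_eq.2 hi0
          have : (j : ℕ) + 1 = k := by
            have := congrArg Fin.val hik
            simpa using this
          simp only [Function.comp]
          rw [hik, Equiv.swap_apply_right, ← hik]
          simp [Z, ← this]
        · rw [Function.comp, Equiv.swap_apply_of_ne_of_ne hi0 hik]
          obtain ⟨j, rfl⟩ := Fin.exists_succ_eq.2 hi0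
          have : (j : ℕ) + 1 ≠ k := by
            intro hh
            exact hik (Fin.ext (by simpa using hh))
          have h3 : (j : ℕ) < k ↔ (j : ℕ) + 1 < k := by omega
          simp [Z, h3]
    rw [e1, e2, hF] at h1
    rw [h1]
    ring
  have lim : Filter.Tendsto (fun s : ℝ => ∑ k ∈ Finset.range (m + 1),
        K (x + s) x (fun i => if (i : ℕ) < k then x + s else x)) (nhdsWithin 0 {0}ᶜ)
      (nhds ((m + 1 : ℝ) * K x x (fun _ => x))) := by
    have hc : Continuous (fun s : ℝ => ∑ k ∈ Finset.range (m + 1),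
        K (x + s) x (fun i => if (i : ℕ) < k then x + s else x)) := by
      refine continuous_finsetSum _ fun k _ => ?_
      refine hK.comp (f := fun s : ℝ => (x + s, x,
        fun i : Fin m => if (i : ℕ) < k then x + s else x)) ?_
      refine (by fun_prop : Continuous fun s : ℝ => x + s).prodMk
        (continuous_const.prodMk (continuous_pi fun i => ?_))
      split_ifs <;> fun_prop
    have := (hc.tendsto 0).mono_left (nhdsWithin_le_nhds (s := {0}ᶜ))
    simpa using this
  refine lim.congr' ?_
  filter_upwards [self_mem_nhdsWithin] with s hs
  have hs' : s ≠ 0 := hs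
  rw [tel, smul_eq_mul, inv_mul_cancel_left₀ hs']

lemma cons_const {m : ℕ} (x : ℝ) :
    (Fin.cons x (fun _ => x) : Fin (m + 1) → ℝ) = fun _ => x := by
  ext i
  refine Fin.cases ?_ (fun i => ?_) i <;> simp

/-- the integrand -/
noncomputable def HH (N : (n : ℕ) → (Fin n → ℝ) → (Fin n → ℝ) → ℝ) (m : ℕ) (p q : ℝ)
    (X : Fin m → ℝ) (y : ℝ) : ℝ :=
  N (m + 2) (Fin.cons p (Fin.cons q X : Fin (m + 1) → ℝ)) (fun _ => y) * N m X (fun _ => y) /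
    (N (m + 1) (Fin.cons p X) (fun _ => y) * N (m + 1) (Fin.cons q X) (fun _ => y))

lemma HH_cont {u : ℝ → ℝ → ℝ} {N : (n : ℕ) → (Fin n → ℝ) → (Fin n → ℝ) → ℝ}
    (hN : ∀ n, ExtendsRatio2 n u (N n)) (hp : ∀ n x y, 0 < N n x y) (m : ℕ) :
    Continuous fun z : (ℝ × ℝ × (Fin m → ℝ)) × ℝ => HH N m z.1.1 z.1.2.1 z.1.2.2 z.2 := by
  have hcc : ∀ n {α : Type} [TopologicalSpace α] (f g : α → Fin n → ℝ), Continuous f →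
      Continuous g → Continuous fun a => N n (f a) (g a) := fun n α _ f g hf hg =>
    (hN n).1.comp (hf.prodMk hg)
  unfold HH
  refine Continuous.div (Continuous.mul ?_ ?_) (Continuous.mul ?_ ?_)
    fun z => (mul_pos (hp _ _ _) (hp _ _ _)).ne'
  · exact hcc _ _ _ (Continuous.finCons (by fun_prop)
      (Continuous.finCons (by fun_prop) (by fun_prop))) (by fun_prop)
  · exact hcc _ _ _ (by fun_prop) (by fun_prop)
  · exact hcc _ _ _ (Continuous.finCons (by fun_prop) (by fun_prop)) (by fun_prop)
  · exact hcc _ _ _ (Continuous.finCons (by fun_prop) (by fun_prop)) (by fun_prop)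

lemma deriv_y {u : ℝ → ℝ → ℝ} {N : (n : ℕ) → (Fin n → ℝ) → (Fin n → ℝ) → ℝ}
    (hN : ∀ n, ExtendsRatio2 n u (N n)) (hp : ∀ n x y, 0 < N n x y)
    {m : ℕ} (p q : ℝ) (X : Fin m → ℝ) (y : ℝ) :
    HasDerivAt (fun y => Real.log (N (m + 1) (Fin.cons p X) (fun _ => y) /
        N (m + 1) (Fin.cons q X) (fun _ => y)))
      ((p - q) * ((m + 1 : ℝ) * HH N m p q X y)) y := by
  have hcc : ∀ n {α : Type} [TopologicalSpace α] (f g : α → Fin n → ℝ), Continuous f →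
      Continuous g → Continuous fun a => N n (f a) (g a) := fun n α _ f g hf hg =>
    (hN n).1.comp (hf.prodMk hg)
  have h := deriv_diag (m := m)
    (fun Y => N (m + 1) (Fin.cons p X) Y / N (m + 1) (Fin.cons q X) Y)
    (fun σ Y => by simp only [N_perm_right (hN (m + 1))])
    (fun r t Y => (p - q) * N (m + 2) (Fin.cons p (Fin.cons q X : Fin (m + 1) → ℝ))
      (Fin.cons r (Fin.cons t Y : Fin (m + 1) → ℝ)) * N m X Y /
      (N (m + 1) (Fin.cons q X) (Fin.cons r Y) * N (m + 1) (Fin.cons q X) (Fin.cons t Y)))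
    (by
      refine Continuous.div (Continuous.mul (Continuous.mul continuous_const ?_) ?_)
        (Continuous.mul ?_ ?_) fun z => (mul_pos (hp _ _ _) (hp _ _ _)).ne'
      · exact hcc _ _ _ (by fun_prop) (Continuous.finCons (by fun_prop)
          (Continuous.finCons (by fun_prop) (by fun_prop)))
      · exact hcc _ _ _ (by fun_prop) (by fun_prop)
      · exact hcc _ _ _ (by fun_prop) (Continuous.finCons (by fun_prop) (by fun_prop))
      · exact hcc _ _ _ (by fun_prop) (Continuous.finCons (by fun_prop) (by fun_prop)))
    (by
      intro r t Y
      have hj := N_jacobi hN hp p q r t X Y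
      have h1 := (hp (m + 1) (Fin.cons q X) (Fin.cons r Y)).ne'
      have h2 := (hp (m + 1) (Fin.cons q X) (Fin.cons t Y)).ne'
      rw [div_sub_div _ _ h1 h2, ← mul_div_assoc]
      congr 1
      linear_combination -hj) y
  have h1 := hp (m + 1) (Fin.cons p X) (fun _ => y)
  have h2 := hp (m + 1) (Fin.cons q X) (fun _ => y)
  have h' := h.log (div_pos h1 h2).ne'
  convert h' using 1
  simp only [cons_const]
  unfold HH
  field_simp

lemma toda_N {u : ℝ → ℝ → ℝ} {N : (n : ℕ) → (Fin n → ℝ) → (Fin n → ℝ) → ℝ}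
    (hN : ∀ n, ExtendsRatio2 n u (N n)) (hp : ∀ n x y, 0 < N n x y) (m : ℕ) (a b c d : ℝ) :
    (Real.log (N (m + 1) (fun _ => b) (fun _ => d)) -
      Real.log (N (m + 1) (fun _ => b) (fun _ => c))) -
    (Real.log (N (m + 1) (fun _ => a) (fun _ => d)) -
      Real.log (N (m + 1) (fun _ => a) (fun _ => c))) =
    ∫ x in a..b, (m + 1 : ℝ) * ∫ y in c..d, (m + 1 : ℝ) * HH N m x x (fun _ => x) y := by
  have hH := HH_cont hN hp m
  have hKc : Continuous fun z : ℝ × ℝ × (Fin m → ℝ) =>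
      ∫ y in c..d, (m + 1 : ℝ) * HH N m z.1 z.2.1 z.2.2 y :=
    intervalIntegral.continuous_parametric_intervalIntegral_of_continuous'
      (f := fun (z : ℝ × ℝ × (Fin m → ℝ)) y => (m + 1 : ℝ) * HH N m z.1 z.2.1 z.2.2 y)
      (continuous_const.mul hH) c d
  have hd := deriv_diag (m := m)
    (fun X => Real.log (N (m + 1) X (fun _ => d)) - Real.log (N (m + 1) X (fun _ => c)))
    (fun σ X => by simp only [N_perm_left (hN (m + 1))])
    (fun p q X => ∫ y in c..d, (m + 1 : ℝ) * HH N m p q X y) hKc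
    (by
      intro p q X
      have hcy : Continuous fun y => (p - q) * ((m + 1 : ℝ) * HH N m p q X y) :=
        continuous_const.mul (continuous_const.mul
          (hH.comp (f := fun y : ℝ => ((p, q, X), y)) (by fun_prop)))
      have := intervalIntegral.integral_eq_sub_of_hasDerivAt (a := c) (b := d)
        (fun y _ => deriv_y hN hp p q X y) (hcy.intervalIntegrable _ _)
      rw [intervalIntegral.integral_const_mul] at this
      rw [this, Real.log_div (hp _ _ _).ne' (hp _ _ _).ne',
        Real.log_div (hp _ _ _).ne' (hp _ _ _).ne']
      ring)
  symm
  refine intervalIntegral.integral_eq_sub_of_hasDerivAt (fun x _ => hd x) ?_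
  refine Continuous.intervalIntegrable ?_ _ _
  exact continuous_const.mul
    (hKc.comp (f := fun x : ℝ => (x, x, fun _ => x)) (by fun_prop))

lemma cInv_pos (n : ℕ) : 0 < cInv n :=
  Finset.prod_pos fun i _ => by exact_mod_cast Nat.factorial_pos i

/-- Proposition 3.2: the generalized bi-directional Wronskians `τ_n` built from a
continuous kernel `u` satisfy the two-dimensional Toda equations in integrated form. -/
theorem toda_integrated (u : ℝ → ℝ → ℝ)
    (hu : Continuous fun p : ℝ × ℝ => u p.1 p.2)
    (M : (n : ℕ) → (Fin n → ℝ) → (Fin n → ℝ) → ℝ)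
    (hM : ∀ n, 1 ≤ n → ExtendsRatio2 n u (M n))
    (hMpos : ∀ n, 1 ≤ n → ∀ x y, 0 < M n x y)
    (τ : ℕ → ℝ → ℝ → ℝ)
    (hτ0 : ∀ a b : ℝ, τ 0 a b = 1)
    (hτ : ∀ n, 1 ≤ n → ∀ a b : ℝ,
      τ n a b = (cInv n) ^ 2 * M n (fun _ => a) (fun _ => b)) :
    ∀ n, 1 ≤ n → ∀ a b c d : ℝ,
      Real.log (τ n a c * τ n b d / (τ n a d * τ n b c)) =
        ∫ x in a..b, ∫ y in c..d,
          τ (n - 1) x y * τ (n + 1) x y / (τ n x y) ^ 2 := by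
  let N : (n : ℕ) → (Fin n → ℝ) → (Fin n → ℝ) → ℝ := fun n x y => if n = 0 then 1 else M n x y
  have hNM : ∀ n, 1 ≤ n → N n = M n := by
    intro n hn
    have : n ≠ 0 := by omega
    simp [N, this]
  have hN : ∀ n, ExtendsRatio2 n u (N n) := by
    intro n
    rcases Nat.eq_zero_or_pos n with rfl | hn
    · refine ⟨by simp only [N, if_true]; exact continuous_const, fun x y _ _ => ?_⟩
      simp [N, vdm]
    · rw [hNM n hn]
      exact hM n hn
  have hp : ∀ n x y, 0 < N n x y := by
    intro n x y
    rcases Nat.eq_zero_or_pos n with rfl | hn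
    · simp [N]
    · rw [hNM n hn]
      exact hMpos n hn x y
  have hτN : ∀ n a b, τ n a b = (cInv n) ^ 2 * N n (fun _ => a) (fun _ => b) := by
    intro n a b
    rcases Nat.eq_zero_or_pos n with rfl | hn
    · simp [N, hτ0, cInv]
    · rw [hNM n hn]
      exact hτ n hn a b
  intro n hn a b c d
  obtain ⟨m, rfl⟩ := Nat.exists_eq_add_of_le' hn
  have h := toda_N hN hp m a b c d
  have hc := cInv_pos (m + 1)
  have lhs : Real.log (τ (m + 1) a c * τ (m + 1) b d / (τ (m + 1) a d * τ (m + 1) b c)) =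
      (Real.log (N (m + 1) (fun _ => b) (fun _ => d)) -
      Real.log (N (m + 1) (fun _ => b) (fun _ => c))) -
    (Real.log (N (m + 1) (fun _ => a) (fun _ => d)) -
      Real.log (N (m + 1) (fun _ => a) (fun _ => c))) := by
    have n1 := (hp (m + 1) (fun _ => a) (fun _ => c)).ne'
    have n2 := (hp (m + 1) (fun _ => a) (fun _ => d)).ne'
    have n3 := (hp (m + 1) (fun _ => b) (fun _ => c)).ne'
    have n4 := (hp (m + 1) (fun _ => b) (fun _ => d)).ne'
    have hc2 : (cInv (m + 1)) ^ 2 ≠ 0 := by positivity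
    simp only [hτN]
    rw [Real.log_div (by positivity) (by positivity),
      Real.log_mul (mul_ne_zero hc2 n1) (mul_ne_zero hc2 n4),
      Real.log_mul (mul_ne_zero hc2 n2) (mul_ne_zero hc2 n3), Real.log_mul hc2 n1, Real.log_mul hc2 n2,
      Real.log_mul hc2 n3, Real.log_mul hc2 n4]
    ring
  rw [lhs, h]
  refine intervalIntegral.integral_congr fun x _ => ?_
  rw [← intervalIntegral.integral_const_mul]
  refine intervalIntegral.integral_congr fun y _ => ?_
  simp only [hτN, HH, cons_const, Nat.add_sub_cancel]
  have s1 : cInv (m + 1) = cInv m * (m.factorial : ℝ) := Finset.prod_range_succ _ _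
  have s2 : cInv (m + 1 + 1) = cInv m * (m.factorial : ℝ) * ((m + 1 : ℝ) * (m.factorial : ℝ)) := by
    unfold cInv
    rw [Finset.prod_range_succ, Finset.prod_range_succ, Nat.factorial_succ]
    push_cast
    ring
  rw [s1, s2]
  have hc0 := (cInv_pos m).ne'
  have hf0 : (m.factorial : ℝ) ≠ 0 := by exact_mod_cast m.factorial_ne_zero
  have n1 := (hp (m + 1) (fun _ => x) (fun _ => y)).ne'
  field_simp
end

section
/- Let f_1,…,f_n : ℝ → ℝ be continuous, linearly independent functions such that f_1∧⋯∧f_n/Δ_n extends continuously to ℝ^n, and let z_1,…,z_n ∈ ℝ be such that the matrix A with (j,k)-th entry f_k(z_j) is invertible. Then for each k ∈ {1,…,n} and all x_2,…,x_n ∈ ℝ, f_1∧⋯∧f_{k−1}∧f_{k+1}∧⋯∧f_n(x_2,…,x_n) = (−1)^{k+1} ∑_{j=1}^n (A^{-1})_{kj} · f_1∧⋯∧f_n(z_j, x_2,…,x_n). -/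
open Finset

/-- f_1 ∧ ⋯ ∧ f_n (x) = det [f_i(x_j)]. -/
noncomputable def wedge {n : ℕ} (f : Fin n → ℝ → ℝ) (x : Fin n → ℝ) : ℝ :=
  Matrix.det (Matrix.of fun i j => f i (x j))

/-- `F` is a continuous extension to ℝ^n of the ratio (f_1∧⋯∧f_n)/Δ_n, which is
defined on points with pairwise distinct coordinates. -/
def ExtendsRatio {n : ℕ} (f : Fin n → ℝ → ℝ) (F : (Fin n → ℝ) → ℝ) : Prop :=
  Continuous F ∧ ∀ x : Fin n → ℝ, Function.Injective x → F x = wedge f x / vdm x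

/-- Laplace-expansion recovery of the minors: with the matrix `A` with (j,k)-th entry
`f_k(z_j)` invertible, for each `k`,
f_1∧⋯∧f_{k−1}∧f_{k+1}∧⋯∧f_n (x_2,…,x_n)
  = (−1)^{k+1} ∑_j (A⁻¹)_{k j} · f_1∧⋯∧f_n (z_j, x_2,…,x_n).
(Here indices are 0-based, so the 1-based sign (−1)^{k+1} reads (−1)^k.) -/
theorem minor_from_inverse (n : ℕ) (f : Fin (n + 1) → ℝ → ℝ)
    (hf : ∀ i, Continuous (f i))
    (hli : LinearIndependent ℝ f)
    (F : (Fin (n + 1) → ℝ) → ℝ) (hF : ExtendsRatio f F)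
    (z : Fin (n + 1) → ℝ)
    (A : Matrix (Fin (n + 1)) (Fin (n + 1)) ℝ)
    (hA : A = Matrix.of fun j k => f k (z j))
    (hAinv : IsUnit A) :
    ∀ (k : Fin (n + 1)) (x : Fin n → ℝ),
      wedge (fun i : Fin n => f (k.succAbove i)) x =
        (-1 : ℝ) ^ (k : ℕ) *
          ∑ j : Fin (n + 1), A⁻¹ k j * wedge f (Fin.cons (z j) x) := by
  intro k x
  have hexp : ∀ j, wedge f (Fin.cons (z j) x) =
      ∑ i : Fin (n + 1), A j i *
        ((-1 : ℝ) ^ (i : ℕ) * wedge (fun l : Fin n => f (i.succAbove l)) x) := by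
    intro j
    unfold wedge
    rw [Matrix.det_succ_column_zero]
    refine Finset.sum_congr rfl fun i _ => ?_
    have hsub : (Matrix.of fun (i : Fin (n + 1)) (l : Fin (n + 1)) =>
        f i ((Fin.cons (z j) x : Fin (n + 1) → ℝ) l)).submatrix i.succAbove Fin.succ =
        Matrix.of fun (i' : Fin n) (l : Fin n) => f (i.succAbove i') (x l) := by
      ext a b
      simp
    rw [hsub, hA]
    simp only [Matrix.of_apply, Fin.cons_zero]
    ring
  have hinv : A⁻¹ * A = 1 :=
    Matrix.nonsing_inv_mul A ((Matrix.isUnit_iff_isUnit_det A).mp hAinv)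
  have hv := congrFun (congrArg (fun M : Matrix (Fin (n + 1)) (Fin (n + 1)) ℝ => M.mulVec
    (fun i : Fin (n + 1) =>
      (-1 : ℝ) ^ (i : ℕ) * wedge (fun l : Fin n => f (i.succAbove l)) x)) hinv) k
  simp only [← Matrix.mulVec_mulVec, Matrix.one_mulVec] at hv
  have hsum : ∑ j : Fin (n + 1), A⁻¹ k j * wedge f (Fin.cons (z j) x) =
      (-1 : ℝ) ^ (k : ℕ) * wedge (fun l : Fin n => f (k.succAbove l)) x := by
    rw [← hv]
    simp only [hexp]
    rfl
  rw [hsum, ← mul_assoc, ← mul_pow]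
  simp
end

section
/- Suppose ρ_1, ρ_2,…,ρ_n : ℝ → ℝ are continuous functions, and define g_1 = ρ_1, g_2 = ρ_1 ∫ ρ_2, …, g_n = ρ_1 ∫ ρ_2 ∫ ⋯ ∫ ρ_n (iterated indefinite integrals with a fixed choice of antiderivatives), and likewise h_1 = ρ_2, h_2 = ρ_2 ∫ ρ_3, …, h_{n−1} = ρ_2 ∫ ρ_3 ∫ ⋯ ∫ ρ_n (using the same antiderivatives). Then for every x ∈ ℝ^n with x_1 ≤ x_2 ≤ ⋯ ≤ x_n, g_1∧⋯∧g_n(x) = ( ∏_{k=1}^n g_1(x_k) ) · ∫_{y ⪯ x} h_1∧⋯∧h_{n−1}(y) dy, where the integral is over the set of y ∈ ℝ^{n−1} interlacing with x. -/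
open Finset MeasureTheory

theorem wedge_box_integral (m : ℕ) (h Q : Fin m → ℝ → ℝ)
    (hc : ∀ k, Continuous (h k)) (hQ : ∀ k x, HasDerivAt (Q k) (h k x) x)
    (a b : Fin m → ℝ) (hab : ∀ i, a i ≤ b i) :
    ∫ y in {y : Fin m → ℝ | ∀ i : Fin m, a i ≤ y i ∧ y i ≤ b i}, wedge h y =
      Matrix.det (Matrix.of fun i j => Q i (b j) - Q i (a j)) := by
  have hset : {y : Fin m → ℝ | ∀ i : Fin m, a i ≤ y i ∧ y i ≤ b i} =
      Set.univ.pi (fun i => Set.Icc (a i) (b i)) := by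
    ext y; simp only [Set.mem_pi, Set.mem_setOf_eq, Set.mem_Icc, Set.mem_univ, true_imp_iff]
  rw [hset, volume_pi, Measure.restrict_pi_pi]
  have hint : ∀ k j, ∫ t in Set.Icc (a j) (b j), h k t = Q k (b j) - Q k (a j) := by
    intro k j
    rw [integral_Icc_eq_integral_Ioc, ← intervalIntegral.integral_of_le (hab j)]
    exact intervalIntegral.integral_eq_sub_of_hasDerivAt (fun x _ => hQ k x)
      ((hc k).intervalIntegrable _ _)
  simp only [wedge, Matrix.det_apply, Matrix.of_apply]
  rw [integral_finsetSum]
  · refine Finset.sum_congr rfl fun σ _ => ?_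
    rw [show (fun y : Fin m → ℝ => Equiv.Perm.sign σ • ∏ i, h (σ i) (y i)) =
      fun y => ((Equiv.Perm.sign σ : ℤ) : ℝ) * ∏ i, h (σ i) (y i) by
        funext y; rw [Units.smul_def, zsmul_eq_mul], integral_const_mul,
      integral_fintype_prod_eq_prod (μ := fun i => volume.restrict (Set.Icc (a i) (b i)))
        (fun i => h (σ i))]
    simp only [hint]
    rw [Units.smul_def, zsmul_eq_mul]
  · intro σ _
    have : Integrable (fun y : Fin m → ℝ => ∏ i, h (σ i) (y i))
        (Measure.pi fun i => volume.restrict (Set.Icc (a i) (b i))) := by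
      apply Integrable.fintype_prod
      intro i
      exact (hc (σ i)).integrableOn_Icc
    simp only [Units.smul_def, zsmul_eq_mul]
    exact this.const_mul _

theorem det_diff_columns (m : ℕ) (Q : Fin m → ℝ → ℝ) (x : Fin (m + 1) → ℝ) :
    Matrix.det (Matrix.of fun i j : Fin (m + 1) =>
      (Fin.cons (fun _ => 1) Q : Fin (m + 1) → ℝ → ℝ) i (x j)) =
    Matrix.det (Matrix.of fun i j : Fin m => Q i (x j.succ) - Q i (x j.castSucc)) := by
  let R : Fin (m + 1) → ℝ → ℝ := Fin.cons (fun _ => 1) Q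
  let B : Matrix (Fin (m + 1)) (Fin (m + 1)) ℝ := Matrix.of fun i j =>
    (Fin.cons (R i (x 0)) (fun j : Fin m => R i (x j.succ) - R i (x j.castSucc)) :
      Fin (m + 1) → ℝ) j
  have h1 : Matrix.det (Matrix.of fun i j : Fin (m + 1) => R i (x j)) = B.det := by
    apply Matrix.det_eq_of_forall_col_eq_smul_add_pred (fun _ => 1)
    · intro i; simp [B]
    · intro i j; simp [B]
  have h2 : B.det =
      Matrix.det (Matrix.of fun i j : Fin m => Q i (x j.succ) - Q i (x j.castSucc)) := by
    rw [Matrix.det_succ_row_zero, Fin.sum_univ_succ]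
    have h0 : B 0 0 = 1 := by simp [B, R]
    have hs : ∀ j : Fin m, B 0 j.succ = 0 := by intro j; simp [B, R]
    simp only [h0, hs]
    simp
    congr 1
  exact h1.trans h2

/-- With `g_k = ρ_1 ∫ ρ_2 ∫ ⋯ ∫ ρ_k` and `h_k = ρ_2 ∫ ρ_3 ∫ ⋯ ∫ ρ_{k+1}` (iterated
indefinite integrals with the same choices of antiderivatives, encoded by the data
`T i k = ρ_{i+1} ∫ ρ_{i+2} ∫ ⋯ ∫ ρ_{i+k+1}` and the antiderivatives `P i k` of
`T (i+1) k`; indices 0-based), for every `x` with `x_1 ≤ x_2 ≤ ⋯ ≤ x_n`,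
g_1∧⋯∧g_n (x) = ( ∏_k g_1(x_k) ) · ∫_{y ⪯ x} h_1∧⋯∧h_{n−1}(y) dy,
the integral being over the `y ∈ ℝ^{n−1}` interlacing with `x`.
Here the number of functions is `n = m + 1`. -/
theorem wedge_as_interlacing_integral (m : ℕ) (ρ : ℕ → ℝ → ℝ)
    (hρ : ∀ i, i ≤ m → Continuous (ρ i))
    (T P : ℕ → ℕ → ℝ → ℝ)
    (hT0 : ∀ i, i ≤ m → T i 0 = ρ i)
    (hP : ∀ i k, i + 1 + k ≤ m → ∀ x : ℝ, HasDerivAt (P i k) (T (i + 1) k x) x)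
    (hTs : ∀ i k, i + (k + 1) ≤ m → T i (k + 1) = fun x => ρ i x * P i k x)
    (g : Fin (m + 1) → ℝ → ℝ) (hg : ∀ k : Fin (m + 1), g k = T 0 (k : ℕ))
    (h : Fin m → ℝ → ℝ) (hh : ∀ k : Fin m, h k = T 1 (k : ℕ)) :
    ∀ x : Fin (m + 1) → ℝ, Monotone x →
      wedge g x =
        (∏ k, g 0 (x k)) *
          ∫ y in {y : Fin m → ℝ |
              ∀ i : Fin m, x i.castSucc ≤ y i ∧ y i ≤ x i.succ}, wedge h y := by
  intro x hx
  have hTc : ∀ k, 1 + k ≤ m → Continuous (T 1 k) := by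
    intro k hk
    cases k with
    | zero => rw [hT0 1 hk]; exact hρ 1 hk
    | succ k =>
      rw [hTs 1 k hk]
      exact (hρ 1 (by omega)).mul
        (continuous_iff_continuousAt.2 fun y => (hP 1 k (by omega) y).continuousAt)
  rw [wedge_box_integral m h (fun k => P 0 k)
    (fun k => by rw [hh]; exact hTc k (by omega))
    (fun k y => by rw [hh]; exact hP 0 k (by omega) y)
    (fun i => x i.castSucc) (fun i => x i.succ)
    (fun i => hx (Fin.castSucc_lt_succ).le),
    ← det_diff_columns m (fun k => P 0 k) x, ← Matrix.det_mul_row, wedge]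
  congr 1
  ext i j
  have hg0 : g 0 = ρ 0 := by rw [hg]; exact hT0 0 (by omega)
  refine Fin.cases ?_ (fun i => ?_) i
  · simp
  · have : g i.succ = fun y => ρ 0 y * P 0 i y := by
      rw [hg]; exact hTs 0 i (by omega)
    simp [this, hg0]
end

section
/- Let n ≥ 2 and let H : ℝ^{n−1} → ℝ be a continuous symmetric function. For x in the open Weyl chamber {x ∈ ℝ^n : x_1 > x_2 > ⋯ > x_n}, define G(x) = (1/Δ_n(x)) ∫_{y ⪯ x} H(y) Δ_{n−1}(y) dy, the integral being over y ∈ ℝ^{n−1} interlacing with x. Then G extends to a continuous function on the closed Weyl chamber {x ∈ ℝ^n : x_1 ≥ x_2 ≥ ⋯ ≥ x_n}, and if H is strictly positive then so is this extension. -/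
open Finset MeasureTheory

namespace WeylAux

lemma vdm_eq {n : ℕ} (x : Fin n → ℝ) : vdm x = (Matrix.vandermonde (-x)).det := by
  rw [Matrix.det_vandermonde, vdm]
  refine prod_congr rfl fun i _ => prod_congr rfl fun j _ => ?_
  simp only [Pi.neg_apply]; ring

lemma continuous_vdm {n : ℕ} : Continuous (vdm : (Fin n → ℝ) → ℝ) := by
  unfold vdm; fun_prop

/-- powers reduce modulo the Vandermonde. -/
lemma exists_pow_matrix (n : ℕ) (c : Fin (n+1) → ℕ) :
    ∃ Q : (Fin (n+1) → ℝ) → ℝ, Continuous Q ∧ ∀ z : Fin (n+1) → ℝ,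
      (Matrix.of fun i j => z i ^ c j).det = (Matrix.vandermonde z).det * Q z := by
  classical
  let R := MvPolynomial (Fin (n+1)) ℝ
  let P : Polynomial R := ∏ i : Fin (n+1), (Polynomial.X - Polynomial.C (MvPolynomial.X i))
  have hP : P.Monic := Polynomial.monic_prod_of_monic _ _ fun i _ => Polynomial.monic_X_sub_C _
  have hdeg : P.natDegree = n + 1 := by
    have := Polynomial.natDegree_prod_of_monic (univ : Finset (Fin (n+1)))
      (fun i => (Polynomial.X - Polynomial.C (MvPolynomial.X i : R)))
      (fun i _ => Polynomial.monic_X_sub_C _)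
    simpa [P] using this
  have hP1 : P ≠ 1 := by
    intro h; rw [h] at hdeg; simp at hdeg
  let r : ℕ → Polynomial R := fun k => (Polynomial.X ^ k) %ₘ P
  let M : Matrix (Fin (n+1)) (Fin (n+1)) R := Matrix.of fun k j => (r (c j)).coeff k
  refine ⟨fun z => MvPolynomial.eval z M.det, MvPolynomial.continuous_eval _, fun z => ?_⟩
  change _ = _ * MvPolynomial.eval z M.det
  rw [RingHom.map_det, ← Matrix.det_mul]
  congr 1
  ext i j
  have h1 : (MvPolynomial.X i : R) ^ c j = (r (c j)).eval (MvPolynomial.X i) := by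
    have h := Polynomial.modByMonic_add_div (Polynomial.X ^ c j) P
    have h2 := congrArg (Polynomial.eval (MvPolynomial.X i : R)) h
    have h3 : P.eval (MvPolynomial.X i : R) = 0 := by
      simp only [P, Polynomial.eval_prod]
      exact prod_eq_zero (mem_univ i) (by simp)
    simp only [Polynomial.eval_add, Polynomial.eval_mul, h3, zero_mul, add_zero,
      Polynomial.eval_pow, Polynomial.eval_X] at h2
    exact h2.symm
  have hlt : (r (c j)).natDegree < n + 1 := by
    have := Polynomial.natDegree_modByMonic_lt (Polynomial.X ^ c j) hP hP1
    rwa [hdeg] at this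
  rw [Polynomial.eval_eq_sum_range' hlt] at h1
  have h4 := congrArg (MvPolynomial.eval z) h1
  simp only [map_pow, MvPolynomial.eval_X, map_sum, map_mul] at h4
  rw [Matrix.of_apply, h4, Matrix.mul_apply, Finset.sum_range]
  refine sum_congr rfl fun k _ => ?_
  simp [M, Matrix.vandermonde_apply, mul_comm]

abbrev box {m : ℕ} (x : Fin (m+1) → ℝ) : Set (Fin m → ℝ) :=
  {y | ∀ i : Fin m, x i.succ ≤ y i ∧ y i ≤ x i.castSucc}

lemma box_eq {m : ℕ} (x : Fin (m+1) → ℝ) :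
    box x = Set.univ.pi fun i : Fin m => Set.Icc (x i.succ) (x i.castSucc) := by
  ext y; simp only [box, Set.mem_setOf_eq, Set.mem_univ_pi, Set.mem_Icc]

lemma box_compact {m : ℕ} (x : Fin (m+1) → ℝ) : IsCompact (box x) := by
  rw [box_eq]; exact isCompact_univ_pi fun i => isCompact_Icc

lemma intOn {m : ℕ} (x : Fin (m+1) → ℝ) {f : (Fin m → ℝ) → ℝ} (hf : Continuous f) :
    Integrable f (volume.restrict (box x)) :=
  hf.continuousOn.integrableOn_compact (box_compact x)

lemma box_integral_prod {m : ℕ} (x : Fin (m+1) → ℝ) (hx : Antitone x) (b : Fin m → ℕ) :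
    ∫ y in box x, ∏ i, (-y i) ^ b i =
      ∏ i : Fin m, ((-x i.succ) ^ (b i + 1) - (-x i.castSucc) ^ (b i + 1)) / (b i + 1) := by
  rw [box_eq, volume_pi, Measure.restrict_pi_pi,
    integral_fintype_prod_eq_prod (f := fun i (t : ℝ) => (-t) ^ b i)]
  refine prod_congr rfl fun i _ => ?_
  rw [integral_Icc_eq_integral_Ioc,
    ← intervalIntegral.integral_of_le (hx (Fin.castSucc_le_succ i)),
    intervalIntegral.integral_comp_neg (fun t => t ^ b i), integral_pow]
 
lemma box_integral_det {m : ℕ} (x : Fin (m+1) → ℝ) (hx : Antitone x) (b : Fin m → ℕ) :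
    ∫ y in box x, (Matrix.of fun i j => (-y i) ^ b j).det =
      (∏ j, (1 / ((b j : ℝ) + 1))) *
      (Matrix.of fun (i : Fin (m+1)) (j : Fin (m+1)) =>
        (-x i) ^ ((Fin.cons 0 fun j => b j + 1 : Fin (m+1) → ℕ) j)).det := by
  have e1 : ∫ y in box x, (Matrix.of fun i j => (-y i) ^ b j).det =
      (Matrix.of fun i j : Fin m => ((-x i.succ) ^ (b j + 1) - (-x i.castSucc) ^ (b j + 1)) / (b j + 1 : ℝ)).det := by
    simp_rw [← Matrix.det_transpose (Matrix.of fun i j : Fin m => _), Matrix.det_apply']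
    rw [integral_finsetSum]
    · refine sum_congr rfl fun σ _ => ?_
      rw [integral_const_mul]
      congr 1
      simp only [Matrix.transpose_apply, Matrix.of_apply]
      exact box_integral_prod x hx (fun i => b (σ i))
    · intro σ _
      exact intOn x (by simp only [Matrix.transpose_apply, Matrix.of_apply]; fun_prop)
  rw [e1]
  let B : Matrix (Fin (m+1)) (Fin (m+1)) ℝ := Matrix.of fun i j =>
    Fin.cases ((-x 0) ^ ((Fin.cons 0 fun j => b j + 1 : Fin (m+1) → ℕ) j))
      (fun i => (-x i.succ) ^ ((Fin.cons 0 fun j => b j + 1 : Fin (m+1) → ℕ) j)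
        - (-x i.castSucc) ^ ((Fin.cons 0 fun j => b j + 1 : Fin (m+1) → ℕ) j)) i
  rw [Matrix.det_eq_of_forall_row_eq_smul_add_pred (B := B) (fun _ => 1)
    (by intro j; simp [B]) (by intro i j; simp [B])]
  rw [Matrix.det_succ_column_zero, Fin.sum_univ_succ]
  simp only [B, Matrix.of_apply, Fin.cases_zero, Fin.cases_succ, Fin.cons_zero, pow_zero, sub_self,
    mul_zero, zero_mul, sum_const_zero, add_zero, Fin.val_zero, one_mul]
  rw [← Matrix.det_mul_row]
  congr 1
  ext i j
  simp [Matrix.submatrix_apply, div_eq_mul_inv, mul_comm]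

lemma box_integral_vdm {m : ℕ} (x : Fin (m+1) → ℝ) (hx : Antitone x) :
    ∫ y in box x, vdm y = (∏ j : Fin m, (1 / ((j : ℝ) + 1))) * vdm x := by
  have := box_integral_det x hx (fun j => (j : ℕ))
  simp_rw [vdm_eq]
  refine this.trans ?_
  congr 2
  ext i j
  refine Fin.cases ?_ (fun j => ?_) j <;> simp [Matrix.vandermonde_apply]

lemma monomial_sum {m : ℕ} (a : Fin m → ℕ) (y : Fin m → ℝ) :
    (∑ σ : Equiv.Perm (Fin m), ∏ i, (-y (σ i)) ^ a i) * vdm y =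
      ∑ τ : Equiv.Perm (Fin m), ((Equiv.Perm.sign τ : ℤ) : ℝ) *
        (Matrix.of fun i j => (-y i) ^ (a j + (τ j : ℕ))).det := by
  have h : ∀ σ : Equiv.Perm (Fin m), vdm y = ((Equiv.Perm.sign σ : ℤ) : ℝ) *
      ∑ τ : Equiv.Perm (Fin m), ((Equiv.Perm.sign τ : ℤ) : ℝ) * ∏ i, (-y (σ i)) ^ (τ i : ℕ) := by
    intro σ
    have h1 := Matrix.det_permute σ (Matrix.vandermonde (-y))
    have h2 : ∑ τ : Equiv.Perm (Fin m), ((Equiv.Perm.sign τ : ℤ) : ℝ) * ∏ i, (-y (σ i)) ^ (τ i : ℕ)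
        = ((Matrix.vandermonde (-y)).submatrix σ id).det := by
      rw [← Matrix.det_transpose, Matrix.det_apply']
      simp [Matrix.vandermonde_apply]
    rw [h2, h1, vdm_eq, ← mul_assoc]
    norm_cast
    simp
  simp_rw [Matrix.det_apply', sum_mul, mul_sum]
  rw [sum_comm]
  refine sum_congr rfl fun σ _ => ?_
  rw [h σ, mul_sum, mul_sum]
  refine sum_congr rfl fun τ _ => ?_
  simp only [Matrix.of_apply, pow_add, prod_mul_distrib]
  ring

def Nice {m : ℕ} (f : (Fin m → ℝ) → ℝ) : Prop :=
  ∃ Q : (Fin (m+1) → ℝ) → ℝ, Continuous Q ∧ ∀ x, Antitone x →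
    ∫ y in box x, (∑ σ : Equiv.Perm (Fin m), f (y ∘ σ)) * vdm y = vdm x * Q x

lemma nice_monomial {m : ℕ} (a : Fin m → ℕ) : Nice (fun y : Fin m → ℝ => ∏ i, (-y i) ^ a i) := by
  choose Q hQc hQ using exists_pow_matrix m
  refine ⟨fun x => ∑ τ : Equiv.Perm (Fin m), ((Equiv.Perm.sign τ : ℤ) : ℝ) *
    ((∏ j, (1 / (((a j + (τ j : ℕ) : ℕ) : ℝ) + 1))) *
      Q (Fin.cons 0 fun j => a j + (τ j : ℕ) + 1) (-x)), ?_, ?_⟩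
  · refine continuous_finsetSum _ fun τ _ => ?_
    exact continuous_const.mul (continuous_const.mul ((hQc _).comp continuous_neg))
  · intro x hx
    simp only [Function.comp_apply]
    simp_rw [monomial_sum]
    rw [integral_finsetSum, mul_sum]
    · refine sum_congr rfl fun τ _ => ?_
      rw [integral_const_mul, box_integral_det x hx (fun j => a j + (τ j : ℕ))]
      have := hQ (Fin.cons 0 fun j => a j + (τ j : ℕ) + 1) (-x)
      simp only [Pi.neg_apply] at this
      rw [this, vdm_eq]
      ring
    · intro τ _
      refine intOn x ?_
      simp_rw [Matrix.det_apply', Matrix.of_apply]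
      fun_prop

lemma nice_poly {m : ℕ} (p : MvPolynomial (Fin m) ℝ) :
    Nice (fun y : Fin m → ℝ => MvPolynomial.eval (-y) p) := by
  choose Q hQc hQ using @nice_monomial m
  refine ⟨fun x => ∑ d ∈ p.support, p.coeff d * Q d x, by fun_prop, fun x hx => ?_⟩
  have h : ∀ y : Fin m → ℝ, (∑ σ : Equiv.Perm (Fin m), MvPolynomial.eval (-(y ∘ σ)) p) * vdm y =
     ∑ d ∈ p.support, p.coeff d *
      ((∑ σ : Equiv.Perm (Fin m), ∏ i, (-(y ∘ σ) i) ^ d i) * vdm y) := by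
    intro y
    simp_rw [MvPolynomial.eval_eq']
    rw [sum_comm, sum_mul]
    refine sum_congr rfl fun d _ => ?_
    rw [← mul_sum]
    simp [mul_assoc]
  simp_rw [h]
  rw [integral_finsetSum, mul_sum]
  · refine sum_congr rfl fun d _ => ?_
    rw [integral_const_mul, hQ d x hx]; ring
  · intro d _
    refine intOn x ?_
    have := @continuous_vdm m
    fun_prop

lemma approx {m : ℕ} {H : (Fin m → ℝ) → ℝ} (hH : Continuous H) (R : ℝ) {ε : ℝ} (hε : 0 < ε) :
    ∃ p : MvPolynomial (Fin m) ℝ, ∀ y : Fin m → ℝ, ‖y‖ ≤ R →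
      |MvPolynomial.eval (-y) p - H y| < ε := by
  let φ : MvPolynomial (Fin m) ℝ →ₐ[ℝ] C(Fin m → ℝ, ℝ) :=
    MvPolynomial.aeval fun i => (⟨fun y => -y i, by fun_prop⟩ : C(Fin m → ℝ, ℝ))
  have hφ : ∀ p y, φ p y = MvPolynomial.eval (-y) p := by
    intro p y
    induction p using MvPolynomial.induction_on with
    | C a => simp [φ]
    | add p q hp hq => simp [hp, hq]
    | mul_X p i hp => rw [map_mul, map_mul, ContinuousMap.mul_apply, hp]; simp [φ]
  have hsep : φ.range.SeparatesPoints := by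
    intro x y hxy
    obtain ⟨i, hi⟩ := Function.ne_iff.mp hxy
    refine ⟨φ (MvPolynomial.X i), ⟨_, ⟨MvPolynomial.X i, rfl⟩, rfl⟩, ?_⟩
    rw [hφ, hφ]
    simpa using hi
  obtain ⟨g, ⟨p, rfl⟩, hg⟩ :=
    ContinuousMap.exists_mem_subalgebra_near_continuous_of_isCompact_of_separatesPoints hsep
      ⟨H, hH⟩ (isCompact_closedBall (0 : Fin m → ℝ) R) hε
  refine ⟨p, fun y hy => ?_⟩
  have := hg y (by simpa using hy)
  rw [Real.norm_eq_abs] at this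
  rw [← hφ]
  exact this

lemma vdm_pos {n : ℕ} {x : Fin n → ℝ} (hx : StrictAnti x) : 0 < vdm x :=
  prod_pos fun i _ => prod_pos fun j hj => sub_pos.2 (hx (mem_Ioi.1 hj))

lemma vdm_nonneg {m : ℕ} {x : Fin (m+1) → ℝ} (hx : Antitone x) {y : Fin m → ℝ} (hy : y ∈ box x) :
    0 ≤ vdm y := by
  refine prod_nonneg fun i _ => prod_nonneg fun j hj => sub_nonneg.2 ?_
  have hij : i < j := mem_Ioi.1 hj
  refine (hy j).2.trans (le_trans (hx ?_) (hy i).1)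
  rw [Fin.le_def]; simpa using hij

lemma box_norm {m : ℕ} {x : Fin (m+1) → ℝ} {R : ℝ} (hR : ‖x‖ ≤ R) {y : Fin m → ℝ}
    (hy : y ∈ box x) : ‖y‖ ≤ R := by
  have h0 : 0 ≤ R := (norm_nonneg _).trans hR
  rw [pi_norm_le_iff_of_nonneg h0] at hR ⊢
  intro i
  have h1 := hR i.succ
  have h2 := hR i.castSucc
  rw [Real.norm_eq_abs, abs_le] at *
  exact ⟨h1.1.trans (hy i).1, (hy i).2.trans h2.2⟩

noncomputable def cst (m : ℕ) : ℝ := ∏ j : Fin m, (1 / ((j : ℝ) + 1))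

lemma cst_pos (m : ℕ) : 0 < cst m := prod_pos fun j _ => by positivity

lemma box_meas {m : ℕ} (x : Fin (m+1) → ℝ) : MeasurableSet (box x) :=
  (box_compact x).measurableSet

lemma lower {m : ℕ} {x : Fin (m+1) → ℝ} (hx : StrictAnti x) {f : (Fin m → ℝ) → ℝ}
    (hf : Continuous f) {l : ℝ} (h : ∀ y ∈ box x, l ≤ f y) :
    l * cst m ≤ (1 / vdm x) * ∫ y in box x, f y * vdm y := by
  have hv := vdm_pos hx
  have h1 : ∫ y in box x, l * vdm y ≤ ∫ y in box x, f y * vdm y := by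
    refine setIntegral_mono_on (intOn x (continuous_const.mul continuous_vdm))
      (intOn x (hf.mul continuous_vdm)) (box_meas x) fun y hy => ?_
    exact mul_le_mul_of_nonneg_right (h y hy) (vdm_nonneg hx.antitone hy)
  rw [integral_const_mul, box_integral_vdm x hx.antitone] at h1
  rw [one_div, ← div_eq_inv_mul, le_div_iff₀ hv, mul_assoc]
  exact h1

lemma abs_bound {m : ℕ} {x : Fin (m+1) → ℝ} (hx : StrictAnti x) {f : (Fin m → ℝ) → ℝ}
    (hf : Continuous f) {l : ℝ} (h : ∀ y ∈ box x, |f y| ≤ l) :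
    |(1 / vdm x) * ∫ y in box x, f y * vdm y| ≤ l * cst m := by
  have h1 := lower hx hf (l := -l) fun y hy => (abs_le.1 (h y hy)).1
  have h2 := lower hx hf.neg (l := -l) fun y hy => neg_le_neg (abs_le.1 (h y hy)).2
  simp only [Pi.neg_apply, neg_mul, integral_neg, mul_neg] at h1 h2
  exact abs_le.2 ⟨h1, by linarith⟩

noncomputable def F {m : ℕ} (H : (Fin m → ℝ) → ℝ) (x : Fin (m+1) → ℝ) : ℝ :=
  (1 / vdm x) * ∫ y in box x, H y * vdm y

lemma exists_approx {m : ℕ} {H : (Fin m → ℝ) → ℝ} (hH : Continuous H)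
    (hs : ∀ (σ : Equiv.Perm (Fin m)) (y : Fin m → ℝ), H (y ∘ σ) = H y) (R : ℝ) {ε : ℝ}
    (hε : 0 < ε) :
    ∃ Q : (Fin (m+1) → ℝ) → ℝ, Continuous Q ∧ ∀ x, StrictAnti x → ‖x‖ ≤ R →
      |F H x - Q x| ≤ ε * cst m := by
  obtain ⟨p, hp⟩ := approx hH R hε
  obtain ⟨Q, hQc, hQ⟩ := nice_poly p
  set N : ℝ := (Fintype.card (Equiv.Perm (Fin m)) : ℝ) with hN
  have hN0 : 0 < N := by rw [hN]; exact_mod_cast Fintype.card_pos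
  refine ⟨fun x => Q x / N, by fun_prop, fun x hx hxR => ?_⟩
  have hv := vdm_pos hx
  let S : (Fin m → ℝ) → ℝ := fun y => ∑ σ : Equiv.Perm (Fin m), MvPolynomial.eval (-(y ∘ σ)) p
  have hSc : Continuous S := by
    refine continuous_finsetSum _ fun σ _ => (MvPolynomial.continuous_eval p).comp ?_
    exact (continuous_pi fun i => continuous_apply (σ i)).neg
  have hQx : Q x = (1 / vdm x) * ∫ y in box x, S y * vdm y := by
    rw [hQ x hx.antitone]; field_simp
  have key : F H x - Q x / N = (1 / vdm x) * ∫ y in box x, (H y - S y / N) * vdm y := by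
    have : ∀ y, (H y - S y / N) * vdm y = H y * vdm y - N⁻¹ * (S y * vdm y) := by
      intro y; ring
    simp_rw [this]
    have hvc := @continuous_vdm m
    rw [integral_sub (f := fun y => H y * vdm y) (g := fun y => N⁻¹ * (S y * vdm y))
      (intOn x (by fun_prop)) (intOn x (by fun_prop)), integral_const_mul, hQx, F]
    ring
  rw [key]
  refine abs_bound hx (by fun_prop) fun y hy => ?_
  have e : H y - S y / N =
      (∑ σ : Equiv.Perm (Fin m), (H (y ∘ σ) - MvPolynomial.eval (-(y ∘ σ)) p)) / N := by
    rw [sum_sub_distrib]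
    simp only [hs, sum_const, card_univ, nsmul_eq_mul, S]
    rw [← hN]; field_simp
  rw [e, abs_div, abs_of_pos hN0, div_le_iff₀ hN0]
  refine (abs_sum_le_sum_abs _ _).trans ?_
  refine (sum_le_sum (g := fun _ => ε) fun σ _ => ?_).trans ?_
  · have hyR := box_norm hxR hy
    have h0 : 0 ≤ R := (norm_nonneg _).trans hyR
    have : ‖y ∘ σ‖ ≤ R := by
      rw [pi_norm_le_iff_of_nonneg h0] at hyR ⊢
      exact fun i => hyR (σ i)
    rw [abs_sub_comm]
    exact (hp _ this).le
  · simp [hN, mul_comm]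

open Filter Topology

lemma mem_closure {n : ℕ} {x : Fin n → ℝ} (hx : Antitone x) :
    x ∈ closure {x : Fin n → ℝ | StrictAnti x} := by
  have ht : Tendsto (fun t : ℝ => fun i : Fin n => x i - t * (i : ℕ)) (𝓝[>] 0) (𝓝 x) := by
    have : Continuous (fun t : ℝ => fun i : Fin n => x i - t * (i : ℕ)) := by fun_prop
    have h := this.tendsto 0
    simp only [zero_mul, sub_zero] at h
    exact h.mono_left nhdsWithin_le_nhds
  refine mem_closure_of_tendsto ht ?_
  filter_upwards [self_mem_nhdsWithin] with t ht i j hij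
  have ht : 0 < t := ht
  have h1 := hx hij.le
  have h2 : ((i : ℕ) : ℝ) < ((j : ℕ) : ℝ) := by exact_mod_cast hij
  have := mul_lt_mul_of_pos_left h2 ht
  linarith

lemma eventually_norm {n : ℕ} (x : Fin n → ℝ) (A : Set (Fin n → ℝ)) :
    ∀ᶠ z in 𝓝[A] x, ‖z‖ ≤ ‖x‖ + 1 := by
  have : ∀ᶠ z in 𝓝 x, ‖z‖ < ‖x‖ + 1 :=
    continuous_norm.continuousAt.eventually_lt continuousAt_const (by linarith)
  exact (this.filter_mono nhdsWithin_le_nhds).mono fun z hz => le_of_lt hz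

lemma exists_limit {m : ℕ} {H : (Fin m → ℝ) → ℝ} (hH : Continuous H)
    (hs : ∀ (σ : Equiv.Perm (Fin m)) (y : Fin m → ℝ), H (y ∘ σ) = H y)
    {x : Fin (m+1) → ℝ} (hx : Antitone x) :
    ∃ L, Tendsto (F H) (𝓝[{x | StrictAnti x}] x) (𝓝 L) := by
  haveI : NeBot (𝓝[{x : Fin (m+1) → ℝ | StrictAnti x}] x) :=
    mem_closure_iff_nhdsWithin_neBot.1 (mem_closure hx)
  rw [← cauchy_map_iff_exists_tendsto, Metric.cauchy_iff]
  refine ⟨inferInstance, fun ε hε => ?_⟩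
  have hc := cst_pos m
  obtain ⟨Q, hQc, hQ⟩ := exists_approx hH hs (‖x‖ + 1) (ε := ε / 8 / cst m) (by positivity)
  have hQe : ∀ᶠ z in 𝓝[{x | StrictAnti x}] x, dist (Q z) (Q x) < ε / 8 :=
    nhdsWithin_le_nhds (Metric.tendsto_nhds.1 (hQc.tendsto x) _ (by positivity))
  refine ⟨{u | |u - Q x| < ε / 3}, ?_, ?_⟩
  · change ∀ᶠ z in 𝓝[{x | StrictAnti x}] x, |F H z - Q x| < ε / 3
    filter_upwards [hQe, eventually_norm x _, self_mem_nhdsWithin] with z h1 h2 h3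
    have h4 := hQ z h3 h2
    rw [div_mul_cancel₀ _ hc.ne'] at h4
    rw [Real.dist_eq] at h1
    have := abs_sub_le (F H z) (Q z) (Q x)
    linarith
  · intro u hu v hv
    simp only [Set.mem_setOf_eq] at hu hv
    rw [Real.dist_eq]
    have := abs_sub_le u (Q x) v
    rw [abs_sub_comm (Q x) v] at this
    linarith

end WeylAux

/-- For a continuous symmetric `H : ℝ^{n−1} → ℝ` (with `n = m + 1 ≥ 2`), the function
G(x) = (1/Δ_n(x)) ∫_{y ⪯ x} H(y) Δ_{n−1}(y) dy, defined on the open Weyl chamber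
`x_1 > ⋯ > x_n`, extends continuously to the closed Weyl chamber `x_1 ≥ ⋯ ≥ x_n`,
and the extension is strictly positive whenever `H` is. -/
theorem weyl_chamber_extension (m : ℕ) (hm : 1 ≤ m)
    (H : (Fin m → ℝ) → ℝ)
    (hHcont : Continuous H)
    (hHsymm : ∀ (σ : Equiv.Perm (Fin m)) (y : Fin m → ℝ), H (y ∘ σ) = H y) :
    ∃ G : (Fin (m + 1) → ℝ) → ℝ,
      ContinuousOn G {x : Fin (m + 1) → ℝ | Antitone x} ∧
      (∀ x : Fin (m + 1) → ℝ, StrictAnti x →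
        G x = (1 / vdm x) *
          ∫ y in {y : Fin m → ℝ |
              ∀ i : Fin m, x i.succ ≤ y i ∧ y i ≤ x i.castSucc}, H y * vdm y) ∧
      ((∀ y : Fin m → ℝ, 0 < H y) →
        ∀ x : Fin (m + 1) → ℝ, Antitone x → 0 < G x) := by
  have hlim : ∀ x : Fin (m+1) → ℝ, Antitone x → Filter.Tendsto (WeylAux.F H)
      (nhdsWithin x {x | StrictAnti x}) (nhds (extendFrom {x | StrictAnti x} (WeylAux.F H) x)) :=
    fun x hx => tendsto_extendFrom (WeylAux.exists_limit hHcont hHsymm hx)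
  refine ⟨extendFrom {x | StrictAnti x} (WeylAux.F H), ?_, ?_, ?_⟩
  · exact continuousOn_extendFrom (fun x hx => WeylAux.mem_closure hx)
      fun x hx => WeylAux.exists_limit hHcont hHsymm hx
  · intro x hx
    have h1 := (hlim x hx.antitone).mono_left (pure_le_nhdsWithin (show x ∈ {x | StrictAnti x} from hx))
    have h2 := tendsto_pure_nhds (WeylAux.F H) x
    exact tendsto_nhds_unique h1 h2
  · intro hpos x hx
    haveI : Filter.NeBot (nhdsWithin x {x : Fin (m+1) → ℝ | StrictAnti x}) :=
      mem_closure_iff_nhdsWithin_neBot.1 (WeylAux.mem_closure hx)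
    obtain ⟨y0, -, hy0⟩ := (isCompact_closedBall (0 : Fin m → ℝ) (‖x‖ + 1)).exists_isMinOn
      ⟨0, Metric.mem_closedBall_self (by positivity)⟩ hHcont.continuousOn
    refine lt_of_lt_of_le (mul_pos (hpos y0) (WeylAux.cst_pos m)) (ge_of_tendsto (hlim x hx) ?_)
    filter_upwards [WeylAux.eventually_norm x _, self_mem_nhdsWithin] with z h2 h3
    exact WeylAux.lower h3 hHcont fun y hy =>
      hy0 (by simpa using WeylAux.box_norm h2 hy)
end

section
/- Let f_1, f_2 : ℝ → ℝ be continuous with f_2 strictly positive. Then the function (x_1,x_2) ↦ (f_1(x_1)f_2(x_2) − f_1(x_2)f_2(x_1))/(x_1 − x_2), defined off the diagonal of ℝ^2, extends continuously to ℝ^2 if and only if the ratio f_1/f_2 is continuously differentiable. In that case, denoting by E the continuous extension, for all a, b ∈ ℝ: f_1(b)/f_2(b) − f_1(a)/f_2(a) = ∫_a^b E(x,x)/f_2(x)^2 dx. -/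
open MeasureTheory

theorem ratio_hasDerivAt (f₁ f₂ : ℝ → ℝ) (h₂ : Continuous f₂) (hpos : ∀ x : ℝ, 0 < f₂ x)
    (E : ℝ → ℝ → ℝ) (hE : Continuous (fun p : ℝ × ℝ => E p.1 p.2))
    (h : ∀ x₁ x₂ : ℝ, x₁ ≠ x₂ →
      E x₁ x₂ = (f₁ x₁ * f₂ x₂ - f₁ x₂ * f₂ x₁) / (x₁ - x₂)) (x : ℝ) :
    HasDerivAt (fun x => f₁ x / f₂ x) (E x x / (f₂ x) ^ 2) x := by
  rw [hasDerivAt_iff_tendsto_slope]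
  have hc : Continuous (fun y => E y x / (f₂ x * f₂ y)) := by
    refine Continuous.div (hE.comp (by fun_prop : Continuous fun y : ℝ => (y, x)))
      (by fun_prop) fun y => (mul_pos (hpos x) (hpos y)).ne'
  have ht := (hc.tendsto x).mono_left (nhdsWithin_le_nhds (s := {x}ᶜ))
  rw [← pow_two] at ht
  refine ht.congr' ?_
  filter_upwards [self_mem_nhdsWithin] with y hy
  have hy' : y ≠ x := hy
  have h0 : y - x ≠ 0 := sub_ne_zero.2 hy'
  have hx2 := (hpos x).ne'
  have hy2 := (hpos y).ne'
  rw [h y x hy', slope_def_field]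
  field_simp

theorem ratio_continuous (f₂ : ℝ → ℝ) (h₂ : Continuous f₂) (hpos : ∀ x : ℝ, 0 < f₂ x)
    (E : ℝ → ℝ → ℝ) (hE : Continuous (fun p : ℝ × ℝ => E p.1 p.2)) :
    Continuous (fun x => E x x / (f₂ x) ^ 2) :=
  Continuous.div (hE.comp (by fun_prop : Continuous fun y : ℝ => (y, y)))
    (by fun_prop) (fun y => ne_of_gt (pow_pos (hpos y) 2))

/-- For continuous `f₁, f₂` with `f₂` strictly positive:
(i) the off-diagonal ratio `(f₁(x₁)f₂(x₂) − f₁(x₂)f₂(x₁))/(x₁ − x₂)` extends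
continuously to ℝ² if and only if `f₁/f₂` is continuously differentiable; and
(ii) for any such continuous extension `E` and all `a, b`:
f₁(b)/f₂(b) − f₁(a)/f₂(a) = ∫_a^b E(x,x)/f₂(x)² dx. -/
theorem ratio_extension_iff_C1 (f₁ f₂ : ℝ → ℝ)
    (h₁ : Continuous f₁) (h₂ : Continuous f₂) (hpos : ∀ x : ℝ, 0 < f₂ x) :
    ((∃ E : ℝ → ℝ → ℝ,
        Continuous (fun p : ℝ × ℝ => E p.1 p.2) ∧
        ∀ x₁ x₂ : ℝ, x₁ ≠ x₂ →
          E x₁ x₂ = (f₁ x₁ * f₂ x₂ - f₁ x₂ * f₂ x₁) / (x₁ - x₂)) ↔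
      ContDiff ℝ 1 (fun x => f₁ x / f₂ x)) ∧
    ∀ E : ℝ → ℝ → ℝ,
      Continuous (fun p : ℝ × ℝ => E p.1 p.2) →
      (∀ x₁ x₂ : ℝ, x₁ ≠ x₂ →
        E x₁ x₂ = (f₁ x₁ * f₂ x₂ - f₁ x₂ * f₂ x₁) / (x₁ - x₂)) →
      ∀ a b : ℝ,
        f₁ b / f₂ b - f₁ a / f₂ a = ∫ x in a..b, E x x / (f₂ x) ^ 2 := by
  refine ⟨⟨?_, ?_⟩, ?_⟩
  · rintro ⟨E, hE, h⟩
    have hd := ratio_hasDerivAt f₁ f₂ h₂ hpos E hE h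
    rw [contDiff_one_iff_deriv]
    refine ⟨fun x => (hd x).differentiableAt, ?_⟩
    rw [show deriv (fun x => f₁ x / f₂ x) = fun x => E x x / (f₂ x) ^ 2 from
      funext fun x => (hd x).deriv]
    exact ratio_continuous f₂ h₂ hpos E hE
  · intro hg
    obtain ⟨hd, hc⟩ := contDiff_one_iff_deriv.1 hg
    set g : ℝ → ℝ := fun x => f₁ x / f₂ x with hgdef
    refine ⟨fun x y => f₂ x * f₂ y * ∫ t in (0:ℝ)..1, deriv g (y + (x - y) * t), ?_, ?_⟩
    · have : Continuous (fun p : ℝ × ℝ =>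
          ∫ t in (0:ℝ)..1, deriv g (p.2 + (p.1 - p.2) * t)) := by
        apply intervalIntegral.continuous_parametric_intervalIntegral_of_continuous'
        exact hc.comp (by fun_prop :
          Continuous fun q : (ℝ × ℝ) × ℝ => q.1.2 + (q.1.1 - q.1.2) * q.2)
      fun_prop
    · intro x y hxy
      have h0 : x - y ≠ 0 := sub_ne_zero.2 hxy
      have hx2 := (hpos x).ne'
      have hy2 := (hpos y).ne'
      have hI : (∫ t in (0:ℝ)..1, deriv g (y + (x - y) * t)) = (x - y)⁻¹ * (g x - g y) := by
        rw [intervalIntegral.integral_comp_add_mul (fun t => deriv g t) h0]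
        rw [intervalIntegral.integral_deriv_eq_sub (fun t _ => hd t)
          (hc.intervalIntegrable _ _)]
        simp
      beta_reduce
      rw [hI]
      simp only [hgdef]
      field_simp
      try ring
  · intro E hE h a b
    rw [intervalIntegral.integral_eq_sub_of_hasDerivAt
      (fun x _ => ratio_hasDerivAt f₁ f₂ h₂ hpos E hE h x)
      ((ratio_continuous f₂ h₂ hpos E hE).intervalIntegrable _ _)]
end

section
/- Let u : ℝ × ℝ → ℝ be smooth (infinitely differentiable). For n ≥ 1 define the bi-directional Wronskian τ_n(x,y) = det[∂_x^{i−1}∂_y^{j−1} u(x,y)]_{i,j=1}^n, and set τ_0 ≡ 1. Then for every n ≥ 1 and all (x,y) ∈ ℝ^2, the bilinear form of the two-dimensional Toda equation holds: τ_n(x,y)·∂_x∂_y τ_n(x,y) − (∂_x τ_n(x,y))·(∂_y τ_n(x,y)) = τ_{n−1}(x,y)·τ_{n+1}(x,y). -/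
/-- The mixed partial derivative ∂_x^i ∂_y^j u (x, y) of a function of two real
variables. -/
noncomputable def mixedDeriv (u : ℝ → ℝ → ℝ) (i j : ℕ) (x y : ℝ) : ℝ :=
  iteratedDeriv i (fun s => iteratedDeriv j (fun t => u s t) y) x

/-- The bi-directional Wronskian τ_n(x,y) = det[∂_x^{i−1} ∂_y^{j−1} u(x,y)]_{i,j=1}^n
(τ_0 ≡ 1, as the empty determinant). -/
noncomputable def biWronskian (u : ℝ → ℝ → ℝ) (n : ℕ) (x y : ℝ) : ℝ :=
  Matrix.det (Matrix.of fun i j : Fin n => mixedDeriv u (i : ℕ) (j : ℕ) x y)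

open Matrix

noncomputable def pdx (f : ℝ × ℝ → ℝ) : ℝ × ℝ → ℝ := fun p => fderiv ℝ f p (1, 0)
noncomputable def pdy (f : ℝ × ℝ → ℝ) : ℝ × ℝ → ℝ := fun p => fderiv ℝ f p (0, 1)

lemma pdx_smooth {f : ℝ × ℝ → ℝ} (hf : ContDiff ℝ (⊤ : ℕ∞) f) : ContDiff ℝ (⊤ : ℕ∞) (pdx f) :=
  (hf.fderiv_right (m := (⊤ : ℕ∞)) (by simp)).clm_apply contDiff_const

lemma pdy_smooth {f : ℝ × ℝ → ℝ} (hf : ContDiff ℝ (⊤ : ℕ∞) f) : ContDiff ℝ (⊤ : ℕ∞) (pdy f) :=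
  (hf.fderiv_right (m := (⊤ : ℕ∞)) (by simp)).clm_apply contDiff_const

lemma pdx_iter_smooth {f : ℝ × ℝ → ℝ} (hf : ContDiff ℝ (⊤ : ℕ∞) f) (i : ℕ) :
    ContDiff ℝ (⊤ : ℕ∞) (pdx^[i] f) := by
  induction i with
  | zero => exact hf
  | succ i ih => rw [Function.iterate_succ_apply']; exact pdx_smooth ih

lemma pdy_iter_smooth {f : ℝ × ℝ → ℝ} (hf : ContDiff ℝ (⊤ : ℕ∞) f) (i : ℕ) :
    ContDiff ℝ (⊤ : ℕ∞) (pdy^[i] f) := by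
  induction i with
  | zero => exact hf
  | succ i ih => rw [Function.iterate_succ_apply']; exact pdy_smooth ih

lemma pd_comm {f : ℝ × ℝ → ℝ} (hf : ContDiff ℝ (⊤ : ℕ∞) f) : pdy (pdx f) = pdx (pdy f) := by
  funext p
  have hs : IsSymmSndFDerivAt ℝ f p :=
    (hf.contDiffAt (x := p)).isSymmSndFDerivAt (by
      rw [minSmoothness_of_isRCLikeNormedField]; exact WithTop.coe_le_coe.mpr le_top)
  have hd : DifferentiableAt ℝ (fderiv ℝ f) p :=
    ((hf.fderiv_right (m := (⊤ : ℕ∞)) (by simp)).differentiable (by simp)) p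
  have key : ∀ v w : ℝ × ℝ, fderiv ℝ (fun q => fderiv ℝ f q v) p w
      = fderiv ℝ (fderiv ℝ f) p w v := by
    intro v w
    rw [fderiv_clm_apply hd (differentiableAt_const v)]
    simp
  unfold pdx pdy
  rw [key, key]
  exact hs _ _

lemma pdy_pdx_iter {f : ℝ × ℝ → ℝ} (hf : ContDiff ℝ (⊤ : ℕ∞) f) (i : ℕ) :
    pdy (pdx^[i] f) = pdx^[i] (pdy f) := by
  induction i with
  | zero => rfl
  | succ i ih =>
    rw [Function.iterate_succ_apply', Function.iterate_succ_apply', pd_comm (pdx_iter_smooth hf i),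
      ih]

lemma hasDeriv_pdx {f : ℝ × ℝ → ℝ} (hf : ContDiff ℝ (⊤ : ℕ∞) f) (x y : ℝ) :
    HasDerivAt (fun s => f (s, y)) (pdx f (x, y)) x := by
  have h := ((hf.differentiable (by simp)) (x, y)).hasFDerivAt
  exact h.comp_hasDerivAt x ((hasDerivAt_id x).prodMk (hasDerivAt_const x y))

lemma hasDeriv_pdy {f : ℝ × ℝ → ℝ} (hf : ContDiff ℝ (⊤ : ℕ∞) f) (x y : ℝ) :
    HasDerivAt (fun t => f (x, t)) (pdy f (x, y)) y := by
  have h := ((hf.differentiable (by simp)) (x, y)).hasFDerivAt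
  exact h.comp_hasDerivAt y ((hasDerivAt_const y x).prodMk (hasDerivAt_id y))

lemma iter_pdx {f : ℝ × ℝ → ℝ} (hf : ContDiff ℝ (⊤ : ℕ∞) f) (i : ℕ) (y : ℝ) :
    iteratedDeriv i (fun s => f (s, y)) = fun s => (pdx^[i] f) (s, y) := by
  induction i with
  | zero => simp
  | succ i ih =>
    rw [iteratedDeriv_succ, ih, Function.iterate_succ_apply']
    funext s
    exact (hasDeriv_pdx (pdx_iter_smooth hf i) s y).deriv

lemma iter_pdy {f : ℝ × ℝ → ℝ} (hf : ContDiff ℝ (⊤ : ℕ∞) f) (i : ℕ) (x : ℝ) :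
    iteratedDeriv i (fun t => f (x, t)) = fun t => (pdy^[i] f) (x, t) := by
  induction i with
  | zero => simp
  | succ i ih =>
    rw [iteratedDeriv_succ, ih, Function.iterate_succ_apply']
    funext s
    exact (hasDeriv_pdy (pdy_iter_smooth hf i) x s).deriv

lemma mixedDeriv_eq (u : ℝ → ℝ → ℝ)
    (hu : ContDiff ℝ (⊤ : ℕ∞) (fun p : ℝ × ℝ => u p.1 p.2)) (i j : ℕ) (x y : ℝ) :
    mixedDeriv u i j x y = (pdx^[i] (pdy^[j] (fun p : ℝ × ℝ => u p.1 p.2))) (x, y) := by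
  unfold mixedDeriv
  have h : (fun s => iteratedDeriv j (fun t => u s t) y)
      = fun s => (pdy^[j] (fun p : ℝ × ℝ => u p.1 p.2)) (s, y) := by
    funext s
    exact congrFun (iter_pdy hu j s) y
  rw [h, iter_pdx (pdy_iter_smooth hu j)]

lemma mixed_dx (u : ℝ → ℝ → ℝ)
    (hu : ContDiff ℝ (⊤ : ℕ∞) (fun p : ℝ × ℝ => u p.1 p.2)) (i j : ℕ) (x y : ℝ) :
    HasDerivAt (fun s => mixedDeriv u i j s y) (mixedDeriv u (i + 1) j x y) x := by
  simp only [mixedDeriv_eq u hu]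
  rw [Function.iterate_succ_apply']
  exact hasDeriv_pdx (pdx_iter_smooth (pdy_iter_smooth hu j) i) x y

lemma mixed_dy (u : ℝ → ℝ → ℝ)
    (hu : ContDiff ℝ (⊤ : ℕ∞) (fun p : ℝ × ℝ => u p.1 p.2)) (i j : ℕ) (x y : ℝ) :
    HasDerivAt (fun t => mixedDeriv u i j x t) (mixedDeriv u i (j + 1) x y) y := by
  simp only [mixedDeriv_eq u hu]
  rw [Function.iterate_succ_apply', ← pdy_pdx_iter (pdy_iter_smooth hu j)]
  exact hasDeriv_pdy (pdx_iter_smooth (pdy_iter_smooth hu j) i) x y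

/-- Derivative of a determinant, column by column. -/
lemma hasDerivAt_det_col {ι : Type*} [Fintype ι] [DecidableEq ι] (M : ℝ → Matrix ι ι ℝ)
    (M' : Matrix ι ι ℝ) (x : ℝ) (h : ∀ i j, HasDerivAt (fun s => M s i j) (M' i j) x) :
    HasDerivAt (fun s => (M s).det) (∑ k, ((M x).updateCol k (fun i => M' i k)).det) x := by
  simp only [det_apply']
  rw [Finset.sum_comm]
  refine HasDerivAt.fun_sum fun σ _ => ?_
  rw [← Finset.mul_sum]
  refine HasDerivAt.const_mul _ ?_
  refine (HasDerivAt.fun_finsetProd (fun i _ => h (σ i) i)).congr_deriv ?_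
  refine Finset.sum_congr rfl fun k _ => ?_
  rw [← Finset.prod_erase_mul _ _ (Finset.mem_univ k)]
  simp only [updateCol_self, smul_eq_mul]
  congr 1
  refine Finset.prod_congr rfl fun j hj => ?_
  rw [updateCol_ne (Finset.ne_of_mem_erase hj)]

/-- Indices `0, …, m-1, m+a`. -/
def tIdx (m a : ℕ) : Fin m ⊕ Fin 1 → ℕ := Sum.elim (fun i => (i : ℕ)) (fun _ => m + a)

noncomputable def tDet (u : ℝ → ℝ → ℝ) (m a b : ℕ) (x y : ℝ) : ℝ :=
  Matrix.det (Matrix.of fun i j => mixedDeriv u (tIdx m a i) (tIdx m b j) x y)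

lemma tIdx_next (m : ℕ) (k : Fin m) : ∃ l, l ≠ Sum.inl k ∧ tIdx m 0 l = tIdx m 0 (Sum.inl k) + 1 := by
  by_cases h : (k : ℕ) + 1 < m
  · refine ⟨Sum.inl ⟨k + 1, h⟩, ?_, rfl⟩
    intro h'
    have := congrArg Fin.val (Sum.inl.inj h')
    simp at this
  · refine ⟨Sum.inr 0, by simp, ?_⟩
    simp only [tIdx, Sum.elim_inl, Sum.elim_inr]
    omega

lemma tDet_dy (u : ℝ → ℝ → ℝ)
    (hu : ContDiff ℝ (⊤ : ℕ∞) (fun p : ℝ × ℝ => u p.1 p.2)) (m a : ℕ) (x y : ℝ) :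
    HasDerivAt (fun t => tDet u m a 0 x t) (tDet u m a 1 x y) y := by
  unfold tDet
  refine (hasDerivAt_det_col
    (fun t => Matrix.of fun i j => mixedDeriv u (tIdx m a i) (tIdx m 0 j) x t)
    (Matrix.of fun i j => mixedDeriv u (tIdx m a i) (tIdx m 0 j + 1) x y) y
    (fun i j => mixed_dy u hu _ _ x y)).congr_deriv ?_
  rw [Fintype.sum_sum_type, Finset.sum_eq_zero, zero_add]
  · simp only [Finset.univ_unique, Finset.sum_singleton]
    congr 1
    ext i j
    rcases j with j | j
    · rw [updateCol_ne (by simp)]; simp [tIdx]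
    · rw [Subsingleton.elim j default, updateCol_self]; simp [tIdx]
  · intro k _
    obtain ⟨l, hl, hk⟩ := tIdx_next m k
    refine det_zero_of_column_eq hl ?_
    intro i
    rw [updateCol_ne hl, updateCol_self]
    simp [hk]

lemma tDet_dx (u : ℝ → ℝ → ℝ)
    (hu : ContDiff ℝ (⊤ : ℕ∞) (fun p : ℝ × ℝ => u p.1 p.2)) (m b : ℕ) (x y : ℝ) :
    HasDerivAt (fun s => tDet u m 0 b s y) (tDet u m 1 b x y) x := by
  unfold tDet
  simp only [← det_transpose (Matrix.of fun i j => mixedDeriv u (tIdx m _ i) (tIdx m b j) _ y)]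
  refine (hasDerivAt_det_col
    (fun s => (Matrix.of fun i j => mixedDeriv u (tIdx m 0 i) (tIdx m b j) s y)ᵀ)
    (Matrix.of fun i j => mixedDeriv u (tIdx m 0 j + 1) (tIdx m b i) x y) x
    (fun i j => mixed_dx u hu _ _ x y)).congr_deriv ?_
  rw [Fintype.sum_sum_type, Finset.sum_eq_zero, zero_add]
  · simp only [Finset.univ_unique, Finset.sum_singleton]
    congr 1
    ext i j
    rcases j with j | j
    · rw [updateCol_ne (by simp)]; simp [tIdx]
    · rw [Subsingleton.elim j default, updateCol_self]; simp [tIdx]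
  · intro k _
    obtain ⟨l, hl, hk⟩ := tIdx_next m k
    refine det_zero_of_column_eq hl ?_
    intro i
    rw [updateCol_ne hl, updateCol_self]
    simp [hk]

def bdr {m : ℕ} (A : Matrix (Fin m) (Fin m) ℝ) (B : Matrix (Fin m) (Fin 2) ℝ)
    (C : Matrix (Fin 2) (Fin m) ℝ) (D : Matrix (Fin 2) (Fin 2) ℝ) (a b : Fin 2) :
    Matrix (Fin m ⊕ Fin 1) (Fin m ⊕ Fin 1) ℝ :=
  fromBlocks A (B.submatrix id (fun _ => b)) (C.submatrix (fun _ => a) id)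
    (D.submatrix (fun _ => a) (fun _ => b))

lemma dj_inv {m : ℕ} (A : Matrix (Fin m) (Fin m) ℝ) (B : Matrix (Fin m) (Fin 2) ℝ)
    (C : Matrix (Fin 2) (Fin m) ℝ) (D : Matrix (Fin 2) (Fin 2) ℝ) (hA : A.det ≠ 0) :
    (bdr A B C D 0 0).det * (bdr A B C D 1 1).det - (bdr A B C D 1 0).det * (bdr A B C D 0 1).det
      = A.det * (fromBlocks A B C D).det := by
  have := A.invertibleOfIsUnitDet (isUnit_iff_ne_zero.mpr hA)
  have key : ∀ a b, (bdr A B C D a b).det = A.det * (D - C * ⅟A * B) a b := by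
    intro a b
    unfold bdr
    rw [det_fromBlocks₁₁, det_fin_one]
    rfl
  rw [key, key, key, key, det_fromBlocks₁₁, det_fin_two]
  ring

lemma dj {m : ℕ} (A : Matrix (Fin m) (Fin m) ℝ) (B : Matrix (Fin m) (Fin 2) ℝ)
    (C : Matrix (Fin 2) (Fin m) ℝ) (D : Matrix (Fin 2) (Fin 2) ℝ) :
    (bdr A B C D 0 0).det * (bdr A B C D 1 1).det - (bdr A B C D 1 0).det * (bdr A B C D 0 1).det
      = A.det * (fromBlocks A B C D).det := by
  let At : ℝ → Matrix (Fin m) (Fin m) ℝ := fun t => scalar (Fin m) t - (-A)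
  have hc : Continuous At := by
    refine Continuous.sub ?_ continuous_const
    exact Continuous.matrix_diagonal (continuous_pi fun _ => continuous_id)
  have hb : ∀ a b, Continuous fun t => (bdr (At t) B C D a b).det := fun a b =>
    (hc.matrix_fromBlocks continuous_const continuous_const continuous_const).matrix_det
  have hfin : {t | (At t).det = 0}.Finite := by
    have h0 : (-A).charpoly ≠ 0 := (charpoly_monic _).ne_zero
    refine ((-A).charpoly.roots.toFinset.finite_toSet).subset ?_
    intro t ht
    simp only [Finset.mem_coe, Multiset.mem_toFinset, Polynomial.mem_roots h0, Polynomial.IsRoot,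
      eval_charpoly]
    exact ht
  have hd : Dense {t | (At t).det = 0}ᶜ := hfin.countable.dense_compl ℝ
  have heq := Continuous.ext_on hd
    (f := fun t => (bdr (At t) B C D 0 0).det * (bdr (At t) B C D 1 1).det
      - (bdr (At t) B C D 1 0).det * (bdr (At t) B C D 0 1).det)
    (g := fun t => (At t).det * (fromBlocks (At t) B C D).det)
    (((hb 0 0).mul (hb 1 1)).sub ((hb 1 0).mul (hb 0 1)))
    (hc.matrix_det.mul
      (hc.matrix_fromBlocks continuous_const continuous_const continuous_const).matrix_det)
    (fun t ht => dj_inv (At t) B C D ht)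
  have h := congrFun heq 0
  have hz : At 0 = A := by simp [At]
  simpa only [hz] using h

lemma biW_reindex (u : ℝ → ℝ → ℝ) (m k : ℕ) (x y : ℝ) :
    biWronskian u (m + k) x y = Matrix.det (Matrix.of fun i j : Fin m ⊕ Fin k =>
      mixedDeriv u (finSumFinEquiv i : Fin (m + k)) (finSumFinEquiv j : Fin (m + k)) x y) := by
  unfold biWronskian
  rw [← det_submatrix_equiv_self (finSumFinEquiv (m := m) (n := k))]
  rfl

lemma biW_tDet (u : ℝ → ℝ → ℝ) (m : ℕ) (x y : ℝ) :
    biWronskian u (m + 1) x y = tDet u m 0 0 x y := by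
  rw [biW_reindex]
  unfold tDet
  congr 1
  ext i j
  rcases i with i | i <;> rcases j with j | j <;> simp [tIdx]

/-- For smooth `u`, the bi-directional Wronskians satisfy the bilinear form of the
two-dimensional Toda equation:
τ_n ∂_x∂_y τ_n − (∂_x τ_n)(∂_y τ_n) = τ_{n−1} τ_{n+1}. -/
theorem toda_bilinear (u : ℝ → ℝ → ℝ)
    (hu : ContDiff ℝ (⊤ : ℕ∞) (fun p : ℝ × ℝ => u p.1 p.2)) :
    ∀ n : ℕ, 1 ≤ n → ∀ x y : ℝ,
      biWronskian u n x y *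
          deriv (fun s => deriv (fun t => biWronskian u n s t) y) x -
        deriv (fun s => biWronskian u n s y) x *
          deriv (fun t => biWronskian u n x t) y =
      biWronskian u (n - 1) x y * biWronskian u (n + 1) x y := by
  intro n hn x y
  obtain ⟨m, rfl⟩ : ∃ m, n = m + 1 := ⟨n - 1, by omega⟩
  simp only [biW_tDet u m, (tDet_dy u hu m _ _ _).deriv, (tDet_dx u hu m _ _ _).deriv,
    Nat.add_sub_cancel]
  have h := dj (Matrix.of fun i j : Fin m => mixedDeriv u i j x y)
    (Matrix.of fun (i : Fin m) (j : Fin 2) => mixedDeriv u i (m + j) x y)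
    (Matrix.of fun (i : Fin 2) (j : Fin m) => mixedDeriv u (m + i) j x y)
    (Matrix.of fun (i j : Fin 2) => mixedDeriv u (m + i) (m + j) x y)
  have hb : ∀ a b : Fin 2, (bdr (Matrix.of fun i j : Fin m => mixedDeriv u i j x y)
    (Matrix.of fun (i : Fin m) (j : Fin 2) => mixedDeriv u i (m + j) x y)
    (Matrix.of fun (i : Fin 2) (j : Fin m) => mixedDeriv u (m + i) j x y)
    (Matrix.of fun (i j : Fin 2) => mixedDeriv u (m + i) (m + j) x y) a b).det
      = tDet u m a b x y := by
    intro a b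
    unfold tDet bdr
    congr 1
    ext i j
    rcases i with i | i <;> rcases j with j | j <;> simp [tIdx]
  have hM : biWronskian u (m + 1 + 1) x y = (fromBlocks
    (Matrix.of fun i j : Fin m => mixedDeriv u i j x y)
    (Matrix.of fun (i : Fin m) (j : Fin 2) => mixedDeriv u i (m + j) x y)
    (Matrix.of fun (i : Fin 2) (j : Fin m) => mixedDeriv u (m + i) j x y)
    (Matrix.of fun (i j : Fin 2) => mixedDeriv u (m + i) (m + j) x y)).det := by
    rw [show m + 1 + 1 = m + 2 from rfl, biW_reindex]
    congr 1
    ext i j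
    rcases i with i | i <;> rcases j with j | j <;> simp
  rw [hM]
  simp only [hb] at h
  exact h
end
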